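/- There is a connected component of the Pasch switching graph Sw_4(19) consisting of exactly 16 isomorphism classes of STS(19)s, each of which contains exactly six Pasch configurations; in each of these systems the six Pasch configurations are pairwise block-disjoint, collectively containing 18 points and 24 blocks, and every one of the 16 systems has trivial automorphism group. Moreover, the component, viewed as an undirected graph, is bipartite and its automorphism group has order 256, acting with two orbits of size 8 on the vertices. -/

import Mathlib

/-- A Steiner triple system of order `v` on the point set `Fin v`:
a collection of 3-element blocks such that every pair of distinct points
lies in exactly one block. -/
structure STS (v : ℕ) where
  blocks : Finset (Finset (Fin v))
  card_blocks : ∀ B ∈ blocks, B.card = 3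
  covers : ∀ x y : Fin v, x ≠ y → ∃! B, B ∈ blocks ∧ x ∈ B ∧ y ∈ B

/-- Isomorphism of Steiner triple systems on the same point set: a bijection of the
points mapping the block set of one onto the block set of the other. -/
def STS.Iso {v : ℕ} (S S' : STS v) : Prop :=
  ∃ φ : Equiv.Perm (Fin v), ∀ B : Finset (Fin v), B ∈ S.blocks ↔ B.image φ ∈ S'.blocks

/-- The cycle graph `C_ab` of an STS: vertices are the points outside the block
through `a` and `b` (the remaining points are isolated vertices of this graph),
and `x`, `y` are adjacent whenever `{a,x,y}` or `{b,x,y}` is a block. -/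
def STS.cycleGraph {v : ℕ} (S : STS v) (a b : Fin v) : SimpleGraph (Fin v) :=
  SimpleGraph.fromRel fun x y =>
    (∀ B ∈ S.blocks, a ∈ B → b ∈ B → x ∉ B ∧ y ∉ B) ∧
    ((({a, x, y} : Finset (Fin v)) ∈ S.blocks) ∨ (({b, x, y} : Finset (Fin v)) ∈ S.blocks))

/-- `x 0, x 1, …, x (2k-1)` are the consecutive vertices of a cycle of length `2k`
in the cycle graph `C_ab`, listed so that the blocks through `a` occupy the
even positions and the blocks through `b` the odd positions. -/
def IsSwitchCycle {v : ℕ} (S : STS v) (a b : Fin v) (k : ℕ)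
    (x : ZMod (2 * k) → Fin v) : Prop :=
  2 ≤ k ∧ a ≠ b ∧ Function.Injective x ∧
  (∀ i : ZMod (2 * k), (S.cycleGraph a b).Adj (x i) (x (i + 1))) ∧
  (∀ j : Fin k,
    (({a, x ((2 * (j : ℕ) : ℕ)), x ((2 * (j : ℕ) + 1 : ℕ))} : Finset (Fin v)) ∈ S.blocks) ∧
    (({b, x ((2 * (j : ℕ) + 1 : ℕ)), x ((2 * (j : ℕ) + 2 : ℕ))} : Finset (Fin v)) ∈ S.blocks))

/-- The `2k` blocks of the STS corresponding to the cycle with consecutive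
vertices `x 0, …, x (2k-1)` in the cycle graph `C_ab`. -/
def removedBlocks {v : ℕ} (a b : Fin v) (k : ℕ)
    (x : ZMod (2 * k) → Fin v) : Finset (Finset (Fin v)) :=
  (Finset.univ.image fun j : Fin k =>
    ({a, x ((2 * (j : ℕ) : ℕ)), x ((2 * (j : ℕ) + 1 : ℕ))} : Finset (Fin v))) ∪
  (Finset.univ.image fun j : Fin k =>
    ({b, x ((2 * (j : ℕ) + 1 : ℕ)), x ((2 * (j : ℕ) + 2 : ℕ))} : Finset (Fin v)))

/-- The block set obtained from `S` by the cycle switch on the cycle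
`x 0, …, x (2k-1)` of `C_ab`: the `2k` cycle blocks are removed and replaced
by the blocks obtained from them by exchanging the roles of `a` and `b`. -/
def switchedBlocks {v : ℕ} (S : STS v) (a b : Fin v) (k : ℕ)
    (x : ZMod (2 * k) → Fin v) : Finset (Finset (Fin v)) :=
  (S.blocks \ removedBlocks a b k x) ∪
    (removedBlocks a b k x).image (Finset.image (Equiv.swap a b))

/-- `S'` is obtained from `S` by a single cycle switch of a cycle whose length lies
in the set `C`. -/
def SwitchStep {v : ℕ} (C : Set ℕ) (S S' : STS v) : Prop :=
  ∃ (a b : Fin v) (k : ℕ) (x : ZMod (2 * k) → Fin v),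
    2 * k ∈ C ∧ IsSwitchCycle S a b k x ∧ S'.blocks = switchedBlocks S a b k x

/-- The switching graph `Sw_C(v)`: vertices are the isomorphism classes of `STS(v)`s,
with an edge between two (distinct) classes whenever some system in one class is
transformed by a single cycle switch, of a cycle whose length lies in `C`, into a
system in the other class. -/
def SwGraph (v : ℕ) (C : Set ℕ) : SimpleGraph (Quot (@STS.Iso v)) :=
  SimpleGraph.fromRel fun q q' =>
    ∃ S S' : STS v, Quot.mk _ S = q ∧ Quot.mk _ S' = q' ∧ SwitchStep C S S'

/-- The STS `S` contains a cycle of length `n`, i.e. some cycle graph of `S`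
has a cycle of length `n`. -/
def STS.HasCycle {v : ℕ} (S : STS v) (n : ℕ) : Prop :=
  ∃ a b : Fin v, a ≠ b ∧ ∃ (z : Fin v) (w : (S.cycleGraph a b).Walk z z),
    w.IsCycle ∧ w.length = n

/-- `W` is the vertex set of a cycle of length `n` in the cycle graph `C_ab`. -/
def CycleOn {v : ℕ} (S : STS v) (a b : Fin v) (n : ℕ) (W : Finset (Fin v)) : Prop :=
  W.card = n ∧ ∃ z ∈ W, ∃ w : (S.cycleGraph a b).Walk z z,
    w.IsCycle ∧ w.length = n ∧ ∀ u : Fin v, u ∈ w.support ↔ u ∈ W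

/-- The number of cycles of length `n` in the STS `S`: a cycle is recorded as a pair
consisting of the (unordered) pair `{a,b}` of points and the vertex set of the cycle
in `C_ab`. -/
noncomputable def STS.numCycles {v : ℕ} (S : STS v) (n : ℕ) : ℕ :=
  Nat.card {p : Finset (Fin v) × Finset (Fin v) //
    ∃ a b : Fin v, a ≠ b ∧ p.1 = {a, b} ∧ CycleOn S a b n p.2}

/-- The cycle graph `C_ab` decomposes as the disjoint union of cycles whose vertex
sets are listed in `Ws` and whose lengths are given by the list `L`. -/
def CycleStructure {v : ℕ} (S : STS v) (a b : Fin v) (L : List ℕ) : Prop :=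
  ∃ Ws : List (Finset (Fin v)),
    Ws.map Finset.card = L ∧ List.Pairwise Disjoint Ws ∧
    (∀ W ∈ Ws, CycleOn S a b W.card W) ∧
    (∀ z : Fin v, (∀ B ∈ S.blocks, a ∈ B → b ∈ B → z ∉ B) ↔ ∃ W ∈ Ws, z ∈ W)

/-- The six points `a,…,f` carry a Pasch configuration of `S`, with blocks
`{a,b,c}, {a,d,e}, {b,e,f}, {c,d,f}`. -/
def PaschQuad {v : ℕ} (S : STS v) (a b c d e f : Fin v) : Prop :=
  ({a, b, c, d, e, f} : Finset (Fin v)).card = 6 ∧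
  ({a, b, c} : Finset (Fin v)) ∈ S.blocks ∧ ({a, d, e} : Finset (Fin v)) ∈ S.blocks ∧
  ({b, e, f} : Finset (Fin v)) ∈ S.blocks ∧ ({c, d, f} : Finset (Fin v)) ∈ S.blocks

/-- `S` contains a Pasch configuration. -/
def STS.HasPasch {v : ℕ} (S : STS v) : Prop :=
  ∃ a b c d e f : Fin v, PaschQuad S a b c d e f

/-- `P` is (the block set of) a Pasch configuration of `S`. -/
def IsPaschConfig {v : ℕ} (S : STS v) (P : Finset (Finset (Fin v))) : Prop :=
  ∃ a b c d e f : Fin v, PaschQuad S a b c d e f ∧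
    P = {({a, b, c} : Finset (Fin v)), {a, d, e}, {b, e, f}, {c, d, f}}

/-- The block set obtained from `S` by switching the Pasch configuration
`{a,b,c}, {a,d,e}, {b,e,f}, {c,d,f}`: its four blocks are replaced by the unique
other set of four blocks on the same six points covering the same pairs. -/
def paschSwitched {v : ℕ} (S : STS v) (a b c d e f : Fin v) : Finset (Finset (Fin v)) :=
  (S.blocks \ {({a, b, c} : Finset (Fin v)), {a, d, e}, {b, e, f}, {c, d, f}}) ∪
    {({a, b, e} : Finset (Fin v)), {a, c, d}, {b, c, f}, {d, e, f}}

/-- `S` and `S'` are twin systems: they are non-isomorphic, each contains exactly one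
Pasch configuration, and switching this unique Pasch configuration in each system
yields a system isomorphic to the other. -/
def IsTwinPair {v : ℕ} (S S' : STS v) : Prop :=
  ¬ S.Iso S' ∧
  (∃! P, IsPaschConfig S P) ∧ (∃! P, IsPaschConfig S' P) ∧
  (∀ a b c d e f : Fin v, PaschQuad S a b c d e f →
    ∃ T : STS v, T.blocks = paschSwitched S a b c d e f ∧ T.Iso S') ∧
  (∀ a b c d e f : Fin v, PaschQuad S' a b c d e f →
    ∃ T : STS v, T.blocks = paschSwitched S' a b c d e f ∧ T.Iso S)

/-- The isomorphism classes `q` and `q'` are the classes of a pair of twin systems. -/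
def QTwin {v : ℕ} (q q' : Quot (@STS.Iso v)) : Prop :=
  ∃ S S' : STS v, Quot.mk _ S = q ∧ Quot.mk _ S' = q' ∧ IsTwinPair S S'

/-!
Six octahedra sharing no edges are placed on 18 of the 19 points. Each splits into two Pasch
configurations covering the same pairs, and the same 33 further blocks complete every choice of one
half per octahedron to a Steiner triple system. The 64 systems so obtained contain no further Pasch
configurations, so Pasch switching moves among them along the edges of the 6-cube.

An isomorphism between two of the systems preserves the blocks in no Pasch configuration. These are
so rigid that only a Klein four-group of permutations preserves them; it permutes the 64 systems
freely. Hence every system has trivial automorphism group, there are 16 isomorphism classes, and the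
component is the quotient of the 6-cube by the Klein four-group. The quotient is a graph over the
3-cube with fibres of size two; vertex degrees and numbers of common neighbours show that its
automorphisms are translations of the base followed by interchanges within the fibres.
-/

open scoped Pointwise

theorem card_toFinset_eq_length_iff {α : Type*} [DecidableEq α] (l : List α) :
    l.toFinset.card = l.length ↔ l.Nodup :=
  Multiset.toFinset_card_eq_card_iff_nodup (m := (l : Multiset α))

theorem perm_eq_or_eq_mul_swap {α : Type*} [DecidableEq α] {φ ψ : Equiv.Perm α} {a b : α}
    (h : ∀ x, x ≠ a → x ≠ b → φ x = ψ x) : φ = ψ ∨ φ = ψ * Equiv.swap a b := by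
  have hmem : ∀ x, x = a ∨ x = b → φ x = ψ a ∨ φ x = ψ b := fun x hx => by
    by_contra! hne
    obtain ⟨y, hy⟩ := ψ.surjective (φ x)
    have hya : y ≠ a := by rintro rfl; exact hne.1 hy.symm
    have hyb : y ≠ b := by rintro rfl; exact hne.2 hy.symm
    obtain rfl := φ.injective ((h y hya hyb).trans hy)
    exact hx.elim hya hyb
  have ha := hmem a (.inl rfl)
  have hb := hmem b (.inr rfl)
  by_cases haa : φ a = ψ a
  · refine .inl (Equiv.ext fun x => ?_)
    by_cases hxa : x = a
    · rw [hxa, haa]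
    by_cases hxb : x = b
    · subst hxb
      exact hb.resolve_left fun h => hxa (φ.injective (h.trans haa.symm))
    exact h x hxa hxb
  · refine .inr (Equiv.ext fun x => ?_)
    have hab := ha.resolve_left haa
    by_cases hxa : x = a
    · simp [hxa, hab]
    by_cases hxb : x = b
    · subst hxb
      simpa using hb.resolve_right fun h => hxa (φ.injective (h.trans hab.symm))
    simpa [Equiv.swap_apply_of_ne_of_ne hxa hxb] using h x hxa hxb

namespace STS

variable {v : ℕ} {S T : STS v} {B C : Finset (Fin v)} {x y z : Fin v}

@[ext]
theorem ext (h : S.blocks = T.blocks) : S = T := by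
  cases S; cases T; cases h; rfl

theorem block_unique (S : STS v) (hB : B ∈ S.blocks) (hC : C ∈ S.blocks) (hxy : x ≠ y)
    (hxB : x ∈ B) (hyB : y ∈ B) (hxC : x ∈ C) (hyC : y ∈ C) : B = C :=
  (S.covers x y hxy).unique ⟨hB, hxB, hyB⟩ ⟨hC, hxC, hyC⟩

theorem exists_ne_mem_of_mem_blocks (hB : B ∈ S.blocks) : ∃ x ∈ B, ∃ y ∈ B, x ≠ y :=
  Finset.one_lt_card.mp (by rw [S.card_blocks B hB]; norm_num)

theorem triple_ne_of_mem_blocks (h : {x, y, z} ∈ S.blocks) : x ≠ y ∧ x ≠ z ∧ y ≠ z := by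
  have hnodup := (card_toFinset_eq_length_iff [x, y, z]).mp (by simpa using S.card_blocks _ h)
  simpa [and_assoc] using hnodup

theorem eq_of_blocks_subset (h : S.blocks ⊆ T.blocks) : S = T := by
  refine STS.ext (h.antisymm fun B hB => ?_)
  obtain ⟨x, hx, y, hy, hxy⟩ := exists_ne_mem_of_mem_blocks hB
  obtain ⟨C, ⟨hC, hxC, hyC⟩, -⟩ := S.covers x y hxy
  exact T.block_unique hB (h hC) hxy hx hy hxC hyC ▸ hC

/-- Permutations of the points act on Steiner triple systems by relabelling the points. -/
instance : MulAction (Equiv.Perm (Fin v)) (STS v) where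
  smul φ S :=
    { blocks := φ • S.blocks
      card_blocks := fun B hB => by
        obtain ⟨C, hC, rfl⟩ := Finset.mem_smul_finset.mp hB
        rw [Finset.card_smul_finset, S.card_blocks C hC]
      covers := fun x y hxy => by
        obtain ⟨B, ⟨hB, hx, hy⟩, hunique⟩ := S.covers (φ⁻¹ • x) (φ⁻¹ • y)
          (φ⁻¹.injective.ne hxy)
        refine ⟨φ • B, ⟨Finset.smul_mem_smul_finset hB, Finset.inv_smul_mem_iff.mp hx,
          Finset.inv_smul_mem_iff.mp hy⟩, fun C ⟨hC, hxC, hyC⟩ => ?_⟩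
        rw [← hunique (φ⁻¹ • C) ⟨Finset.inv_smul_mem_iff.mpr hC,
          Finset.smul_mem_smul_finset hxC, Finset.smul_mem_smul_finset hyC⟩, smul_inv_smul] }
  one_smul S := STS.ext (one_smul _ S.blocks)
  mul_smul φ ψ S := STS.ext (mul_smul φ ψ S.blocks)

theorem smul_blocks (φ : Equiv.Perm (Fin v)) (S : STS v) : (φ • S).blocks = φ • S.blocks := rfl

theorem smul_eq_iff (φ : Equiv.Perm (Fin v)) :
    φ • S = T ↔ ∀ B : Finset (Fin v), B ∈ S.blocks ↔ B.image φ ∈ T.blocks := by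
  constructor
  · rintro rfl B
    exact (Finset.smul_mem_smul_finset_iff (s := S.blocks) φ).symm
  · refine fun h => eq_of_blocks_subset fun B hB => ?_
    obtain ⟨C, hC, rfl⟩ := Finset.mem_smul_finset.mp hB
    exact (h C).mp hC

theorem iso_iff_exists_smul_eq : S.Iso T ↔ ∃ φ : Equiv.Perm (Fin v), φ • S = T :=
  exists_congr fun φ => (smul_eq_iff φ).symm

theorem mk_eq_mk_iff :
    (Quot.mk _ S : Quot (@STS.Iso v)) = Quot.mk _ T ↔ ∃ φ : Equiv.Perm (Fin v), φ • S = T := by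
  have hIso : Equivalence (@STS.Iso v) := by
    refine ⟨fun S => iso_iff_exists_smul_eq.mpr ⟨1, one_smul _ S⟩, fun {S T} h => ?_,
      fun {S T U} h h' => ?_⟩
    · obtain ⟨φ, rfl⟩ := iso_iff_exists_smul_eq.mp h
      exact iso_iff_exists_smul_eq.mpr ⟨φ⁻¹, inv_smul_smul φ S⟩
    · obtain ⟨φ, rfl⟩ := iso_iff_exists_smul_eq.mp h
      obtain ⟨ψ, rfl⟩ := iso_iff_exists_smul_eq.mp h'
      exact iso_iff_exists_smul_eq.mpr ⟨ψ * φ, mul_smul ψ φ S⟩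
  rw [hIso.quot_mk_eq_iff, iso_iff_exists_smul_eq]

/-- A Steiner quasigroup: an idempotent commutative operation with `x * (x * y) = y`. These
operations correspond to Steiner triple systems, `x * y` being the third point of the block
through two distinct points `x` and `y`. -/
structure IsSteinerQuasigroup (op : Fin v → Fin v → Fin v) : Prop where
  idem : ∀ x, op x x = x
  comm : ∀ x y, op x y = op y x
  op_op : ∀ x y, op x (op x y) = y

namespace IsSteinerQuasigroup

variable {op : Fin v → Fin v → Fin v} (h : IsSteinerQuasigroup op)
include h

theorem ne_left (hxy : x ≠ y) : op x y ≠ x := fun hx =>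
  hxy (by rw [← h.op_op x y, hx, h.idem])

theorem ne_right (hxy : x ≠ y) : op x y ≠ y := by
  rw [h.comm]
  exact h.ne_left hxy.symm

theorem block_eq_of_mem (hxy : x ≠ y) {u w : Fin v} (hx : x ∈ ({u, w, op u w} : Finset (Fin v)))
    (hy : y ∈ ({u, w, op u w} : Finset (Fin v))) :
    ({u, w, op u w} : Finset (Fin v)) = {x, y, op x y} := by
  have h₁ : op u (op u w) = w := h.op_op u w
  have h₂ : op w (op u w) = u := by rw [h.comm u w, h.op_op]
  have h₃ : op (op u w) u = w := by rw [h.comm, h₁]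
  have h₄ : op (op u w) w = u := by rw [h.comm, h₂]
  simp only [Finset.mem_insert, Finset.mem_singleton] at hx hy
  rcases hx with rfl | rfl | rfl <;> rcases hy with rfl | rfl | rfl <;>
    first
    | exact absurd rfl hxy
    | grind [h.comm]

end IsSteinerQuasigroup

/-- The Steiner triple system of a Steiner quasigroup. -/
def ofOp (op : Fin v → Fin v → Fin v) (h : IsSteinerQuasigroup op) : STS v where
  blocks := {B | ∃ x y, x ≠ y ∧ B = {x, y, op x y}}
  card_blocks B hB := by
    obtain ⟨x, y, hxy, rfl⟩ := (Finset.mem_filter.mp hB).2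
    exact Finset.card_eq_three.mpr
      ⟨x, y, op x y, hxy, (h.ne_left hxy).symm, (h.ne_right hxy).symm, rfl⟩
  covers x y hxy := by
    refine ⟨{x, y, op x y}, ⟨?_, by simp, by simp⟩, ?_⟩
    · exact Finset.mem_filter.mpr ⟨Finset.mem_univ _, x, y, hxy, rfl⟩
    · rintro B ⟨hB, hx, hy⟩
      obtain ⟨u, w, -, rfl⟩ := (Finset.mem_filter.mp hB).2
      exact h.block_eq_of_mem hxy hx hy

variable {op op' : Fin v → Fin v → Fin v} {h : IsSteinerQuasigroup op}
  {h' : IsSteinerQuasigroup op'} {φ : Equiv.Perm (Fin v)}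

theorem mem_ofOp_blocks : B ∈ (ofOp op h).blocks ↔ ∃ x y, x ≠ y ∧ B = {x, y, op x y} := by
  simp only [ofOp, Finset.mem_filter, Finset.mem_univ, true_and]

theorem triple_mem_ofOp_blocks :
    ({x, y, z} : Finset (Fin v)) ∈ (ofOp op h).blocks ↔ x ≠ y ∧ op x y = z := by
  constructor
  · intro hB
    obtain ⟨hxy, hxz, hyz⟩ := triple_ne_of_mem_blocks hB
    obtain ⟨u, w, -, huw⟩ := mem_ofOp_blocks.mp hB
    have hz : z ∈ ({x, y, op x y} : Finset (Fin v)) := by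
      rw [← h.block_eq_of_mem hxy (u := u) (w := w) (by simp [← huw]) (by simp [← huw]), ← huw]
      simp
    simp only [Finset.mem_insert, Finset.mem_singleton] at hz
    exact ⟨hxy, (hz.resolve_left (Ne.symm hxz)).resolve_left (Ne.symm hyz) |>.symm⟩
  · rintro ⟨hxy, rfl⟩
    exact mem_ofOp_blocks.mpr ⟨x, y, hxy, rfl⟩

theorem smul_ofOp_eq_iff :
    φ • ofOp op h = ofOp op' h' ↔ ∀ x y, φ (op x y) = op' (φ x) (φ y) := by
  constructor
  · intro hφ x y
    obtain rfl | hxy := eq_or_ne x y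
    · rw [h.idem, h'.idem]
    · have hmem := ((smul_eq_iff φ).mp hφ {x, y, op x y}).mp
        (triple_mem_ofOp_blocks.mpr ⟨hxy, rfl⟩)
      simp only [Finset.image_insert, Finset.image_singleton] at hmem
      exact (triple_mem_ofOp_blocks.mp hmem).2.symm
  · refine fun hφ => eq_of_blocks_subset fun B hB => ?_
    obtain ⟨C, hC, rfl⟩ := Finset.mem_smul_finset.mp hB
    obtain ⟨x, y, hxy, rfl⟩ := mem_ofOp_blocks.mp hC
    exact mem_ofOp_blocks.mpr ⟨φ x, φ y, φ.injective.ne hxy, by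
      simp only [Finset.smul_finset_insert, Finset.smul_finset_singleton, Equiv.Perm.smul_def, hφ]⟩

end STS

section Pasch

variable {v : ℕ} {S S' : STS v} {a b c d e f : Fin v}

/-- The four blocks of a Pasch configuration, in the notation of `PaschQuad`. Exchanging `a` and
`f` gives the other four blocks on the same points which cover the same pairs. -/
def paschBlocks (a b c d e f : Fin v) : Finset (Finset (Fin v)) :=
  {{a, b, c}, {a, d, e}, {b, e, f}, {c, d, f}}

theorem paschQuad_iff :
    PaschQuad S a b c d e f ↔ [a, b, c, d, e, f].Nodup ∧ paschBlocks a b c d e f ⊆ S.blocks := by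
  have hcard : ({a, b, c, d, e, f} : Finset (Fin v)).card = 6 ↔ [a, b, c, d, e, f].Nodup := by
    rw [← card_toFinset_eq_length_iff]
    simp
  simp only [PaschQuad, hcard, paschBlocks, Finset.insert_subset_iff, Finset.singleton_subset_iff]

theorem PaschQuad.subset_blocks (h : PaschQuad S a b c d e f) :
    paschBlocks a b c d e f ⊆ S.blocks :=
  (paschQuad_iff.mp h).2

theorem PaschQuad.nodup (h : PaschQuad S a b c d e f) : [a, b, c, d, e, f].Nodup :=
  (paschQuad_iff.mp h).1

theorem PaschQuad.pairwise_ne (h : PaschQuad S a b c d e f) :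
    (a ≠ b ∧ a ≠ c ∧ a ≠ d ∧ a ≠ e ∧ a ≠ f) ∧ (b ≠ c ∧ b ≠ d ∧ b ≠ e ∧ b ≠ f) ∧
      (c ≠ d ∧ c ≠ e ∧ c ≠ f) ∧ (d ≠ e ∧ d ≠ f) ∧ e ≠ f := by
  simpa only [List.nodup_cons, List.mem_cons, List.not_mem_nil, or_false, not_or,
    not_false_eq_true, List.nodup_nil, and_true] using h.nodup

theorem PaschQuad.card_paschBlocks (h : PaschQuad S a b c d e f) :
    (paschBlocks a b c d e f).card = 4 := by
  have hne := h.pairwise_ne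
  have ne_of_mem (x : Fin v) {B C : Finset (Fin v)} (hB : x ∈ B) (hC : x ∉ C) : B ≠ C :=
    ne_of_mem_of_not_mem' hB hC
  have hblocks : [({a, b, c} : Finset (Fin v)), {a, d, e}, {b, e, f}, {c, d, f}].Nodup := by
    simp only [List.nodup_cons, List.mem_cons, List.not_mem_nil, or_false, not_or,
      not_false_eq_true, List.nodup_nil, and_true]
    exact ⟨⟨ne_of_mem b (by simp) (by grind), ne_of_mem a (by simp) (by grind),
      ne_of_mem a (by simp) (by grind)⟩, ⟨ne_of_mem a (by simp) (by grind),
      ne_of_mem a (by simp) (by grind)⟩, ne_of_mem b (by simp) (by grind)⟩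
  simpa [paschBlocks] using (card_toFinset_eq_length_iff _).mpr hblocks

theorem PaschQuad.disjoint_exchange (h : PaschQuad S a b c d e f) :
    Disjoint (paschBlocks f b c d e a) S.blocks := by
  have hne := h.pairwise_ne
  obtain ⟨-, habc, hade, hbef, hcdf⟩ := h
  have rotate : ∀ x y z : Fin v, ({x, y, z} : Finset (Fin v)) = {z, x, y} := by grind
  rw [rotate] at hbef hcdf
  have not_mem {x y z w : Fin v} (hxyz : {x, y, z} ∈ S.blocks)
      (hne : x ≠ y ∧ x ≠ z ∧ y ≠ z ∧ x ≠ w) : {w, y, z} ∉ S.blocks := fun hB => by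
    have hx : x ∈ ({w, y, z} : Finset (Fin v)) := by
      rw [S.block_unique hB hxyz hne.2.2.1] <;> simp
    grind
  rw [Finset.disjoint_left]
  intro B hB hBS
  simp only [paschBlocks, rotate b e a, rotate c d a, Finset.mem_insert,
    Finset.mem_singleton] at hB
  rcases hB with rfl | rfl | rfl | rfl
  · exact not_mem habc (by grind) hBS
  · exact not_mem hade (by grind) hBS
  · exact not_mem hbef (by grind) hBS
  · exact not_mem hcdf (by grind) hBS

theorem isPaschConfig_iff {P : Finset (Finset (Fin v))} :
    IsPaschConfig S P ↔
      ∃ a b c d e f, PaschQuad S a b c d e f ∧ P = paschBlocks a b c d e f :=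
  Iff.rfl

theorem paschBlocks_smul (φ : Equiv.Perm (Fin v)) :
    paschBlocks (φ a) (φ b) (φ c) (φ d) (φ e) (φ f) = φ • paschBlocks a b c d e f := by
  simp only [paschBlocks, Finset.smul_finset_insert, Finset.smul_finset_singleton,
    Equiv.Perm.smul_def]

theorem PaschQuad.smul (φ : Equiv.Perm (Fin v)) (h : PaschQuad S a b c d e f) :
    PaschQuad (φ • S) (φ a) (φ b) (φ c) (φ d) (φ e) (φ f) := by
  rw [paschQuad_iff, paschBlocks_smul, STS.smul_blocks, Finset.smul_finset_subset_smul_finset_iff]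
  exact ⟨h.nodup.map φ.injective, h.subset_blocks⟩

theorem IsPaschConfig.smul (φ : Equiv.Perm (Fin v)) {P : Finset (Finset (Fin v))}
    (h : IsPaschConfig S P) : IsPaschConfig (φ • S) (φ • P) := by
  obtain ⟨a, b, c, d, e, f, hquad, rfl⟩ := isPaschConfig_iff.mp h
  exact ⟨_, _, _, _, _, _, hquad.smul φ, (paschBlocks_smul φ).symm⟩

theorem isPaschConfig_smul_iff (φ : Equiv.Perm (Fin v)) {P : Finset (Finset (Fin v))} :
    IsPaschConfig (φ • S) P ↔ IsPaschConfig S (φ⁻¹ • P) :=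
  ⟨fun h => by simpa only [inv_smul_smul] using h.smul φ⁻¹,
    fun h => by simpa only [smul_inv_smul] using h.smul φ⟩

/-- Two systems differ by a Pasch switch: each contains one of the two opposite Pasch
configurations on some six points, and all their other blocks agree. -/
def PaschSwitch (S S' : STS v) : Prop :=
  ∃ a b c d e f, PaschQuad S a b c d e f ∧ PaschQuad S' f b c d e a ∧
    S.blocks \ paschBlocks a b c d e f = S'.blocks \ paschBlocks f b c d e a

theorem PaschSwitch.symm (h : PaschSwitch S S') : PaschSwitch S' S := by
  obtain ⟨a, b, c, d, e, f, hS, hS', hrest⟩ := h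
  exact ⟨f, b, c, d, e, a, hS', hS, hrest.symm⟩

theorem PaschSwitch.smul (φ : Equiv.Perm (Fin v)) (h : PaschSwitch S S') :
    PaschSwitch (φ • S) (φ • S') := by
  obtain ⟨a, b, c, d, e, f, hS, hS', hrest⟩ := h
  refine ⟨_, _, _, _, _, _, hS.smul φ, hS'.smul φ, ?_⟩
  simp only [paschBlocks_smul, STS.smul_blocks, ← Finset.smul_finset_sdiff, hrest]

theorem PaschQuad.blocks_eq_exchange_iff (h : PaschQuad S a b c d e f) :
    S'.blocks = S.blocks \ paschBlocks a b c d e f ∪ paschBlocks f b c d e a ↔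
      PaschQuad S' f b c d e a ∧
        S.blocks \ paschBlocks a b c d e f = S'.blocks \ paschBlocks f b c d e a := by
  constructor
  · intro hS'
    have hne := h.pairwise_ne
    refine ⟨paschQuad_iff.mpr ⟨by grind, hS' ▸ Finset.subset_union_right⟩, ?_⟩
    rw [hS', Finset.union_sdiff_cancel_right]
    exact (h.disjoint_exchange.mono_right Finset.sdiff_subset).symm
  · rintro ⟨hquad, hrest⟩
    rw [hrest, Finset.sdiff_union_of_subset hquad.subset_blocks]

section SwitchCycle

variable {x : ZMod (2 * 2) → Fin v}

theorem removedBlocks_two :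
    removedBlocks a b 2 x = paschBlocks a (x 0) (x 1) (x 2) (x 3) b := by
  have huniv : (Finset.univ : Finset (Fin 2)) = {0, 1} := rfl
  have hcast : removedBlocks a b 2 x =
      {{a, x 0, x 1}, {a, x 2, x 3}} ∪ {{b, x 1, x 2}, {b, x 3, x 0}} := by
    simp only [removedBlocks, huniv, Finset.image_insert, Finset.image_singleton]
    rfl
  have h₁₂ : ({b, x 1, x 2} : Finset (Fin v)) = {x 1, x 2, b} := by grind
  have h₃₀ : ({b, x 3, x 0} : Finset (Fin v)) = {x 0, x 3, b} := by grind
  rw [hcast, h₁₂, h₃₀]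
  ext B
  simp only [paschBlocks, Finset.mem_union, Finset.mem_insert, Finset.mem_singleton]
  tauto

theorem switchCycle_blocks_two_iff :
    (∀ j : Fin 2,
      (({a, x ((2 * (j : ℕ) : ℕ)), x ((2 * (j : ℕ) + 1 : ℕ))} : Finset (Fin v)) ∈ S.blocks) ∧
      (({b, x ((2 * (j : ℕ) + 1 : ℕ)), x ((2 * (j : ℕ) + 2 : ℕ))} : Finset (Fin v)) ∈ S.blocks)) ↔
    paschBlocks a (x 0) (x 1) (x 2) (x 3) b ⊆ S.blocks := by
  have h₁₂ : ({b, x 1, x 2} : Finset (Fin v)) = {x 1, x 2, b} := by grind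
  have h₃₀ : ({b, x 3, x 0} : Finset (Fin v)) = {x 0, x 3, b} := by grind
  rw [Fin.forall_fin_two]
  change ({a, x 0, x 1} ∈ S.blocks ∧ {b, x 1, x 2} ∈ S.blocks) ∧
    {a, x 2, x 3} ∈ S.blocks ∧ {b, x 3, x 0} ∈ S.blocks ↔ _
  simp only [h₁₂, h₃₀, paschBlocks, Finset.insert_subset_iff, Finset.singleton_subset_iff]
  tauto

theorem cycleGraph_adj_iff (hab : a ≠ b) {y z : Fin v} :
    (S.cycleGraph a b).Adj y z ↔
      ({a, y, z} ∈ S.blocks ∧ b ∉ ({a, y, z} : Finset (Fin v))) ∨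
        ({b, y, z} ∈ S.blocks ∧ a ∉ ({b, y, z} : Finset (Fin v))) := by
  have hswap : ∀ c : Fin v, ({c, z, y} : Finset (Fin v)) = {c, y, z} := by grind
  simp only [STS.cycleGraph, SimpleGraph.fromRel_adj, hswap]
  constructor
  · rintro ⟨-, h⟩
    have hcovers := (S.covers a b hab).exists
    grind
  · rintro (⟨hB, hb⟩ | ⟨hB, ha⟩)
    · have hne := STS.triple_ne_of_mem_blocks hB
      refine ⟨hne.2.2, Or.inl ⟨fun C hC haC hbC => ⟨fun hy => hb ?_, fun hz => hb ?_⟩, Or.inl hB⟩⟩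
      · rwa [← S.block_unique hC hB hne.1 haC hy (by simp) (by simp)]
      · rwa [← S.block_unique hC hB hne.2.1 haC hz (by simp) (by simp)]
    · have hne := STS.triple_ne_of_mem_blocks hB
      refine ⟨hne.2.2, Or.inl ⟨fun C hC haC hbC => ⟨fun hy => ha ?_, fun hz => ha ?_⟩, Or.inr hB⟩⟩
      · rwa [← S.block_unique hC hB hne.1 hbC hy (by simp) (by simp)]
      · rwa [← S.block_unique hC hB hne.2.1 hbC hz (by simp) (by simp)]

theorem isSwitchCycle_two_iff :
    IsSwitchCycle S a b 2 x ↔ PaschQuad S a (x 0) (x 1) (x 2) (x 3) b := by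
  rw [IsSwitchCycle, switchCycle_blocks_two_iff]
  constructor
  · rintro ⟨-, hab, hinj, hadj, hblocks⟩
    refine paschQuad_iff.mpr ⟨?_, hblocks⟩
    have hx : ∀ i, x i ≠ a ∧ x i ≠ b := fun i => by
      have := (cycleGraph_adj_iff hab).mp (hadj i)
      grind [STS.triple_ne_of_mem_blocks]
    have hx' : [x 0, x 1, x 2, x 3].Nodup :=
      (by decide : [(0 : ZMod (2 * 2)), 1, 2, 3].Nodup).map hinj
    grind [hx 0, hx 1, hx 2, hx 3]
  · intro h
    have hne := h.pairwise_ne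
    refine ⟨le_rfl, hne.1.2.2.2.2, fun i j hij => ?_, fun i => ?_, h.subset_blocks⟩
    · have hx' : ([0, 1, 2, 3].map x).Nodup := by
        have := h.nodup
        grind
      have hall : ∀ k : ZMod (2 * 2), k ∈ [0, 1, 2, 3] := by decide
      exact List.inj_on_of_nodup_map hx' (hall i) (hall j) hij
    · obtain ⟨-, h₀₁, h₂₃, h₀₃, h₁₂⟩ := h
      have adj {y z : Fin v} := (cycleGraph_adj_iff (S := S) hne.1.2.2.2.2 (y := y) (z := z)).mpr
      have hrotate : ∀ y z w : Fin v, ({y, z, w} : Finset (Fin v)) = {w, y, z} := by grind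
      rw [hrotate, Finset.pair_comm] at h₀₃
      rw [hrotate] at h₁₂
      have hall : ∀ k : ZMod (2 * 2), k = 0 ∨ k = 1 ∨ k = 2 ∨ k = 3 := by decide
      rcases hall i with rfl | rfl | rfl | rfl
      · exact adj (y := x 0) (z := x 1) (Or.inl ⟨h₀₁, by grind⟩)
      · exact adj (y := x 1) (z := x 2) (Or.inr ⟨h₁₂, by grind⟩)
      · exact adj (y := x 2) (z := x 3) (Or.inl ⟨h₂₃, by grind⟩)
      · exact adj (y := x 3) (z := x 0) (Or.inr ⟨h₀₃, by grind⟩)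

theorem switchedBlocks_two (h : PaschQuad S a (x 0) (x 1) (x 2) (x 3) b) :
    switchedBlocks S a b 2 x =
      S.blocks \ paschBlocks a (x 0) (x 1) (x 2) (x 3) b ∪
        paschBlocks b (x 0) (x 1) (x 2) (x 3) a := by
  have hne := h.pairwise_ne
  have hx : ∀ i, x i ≠ a → x i ≠ b → Equiv.swap a b (x i) = x i := fun i =>
    Equiv.swap_apply_of_ne_of_ne
  rw [switchedBlocks, removedBlocks_two]
  congr 1
  simp only [paschBlocks, Finset.image_insert, Finset.image_singleton]
  grind

end SwitchCycle

theorem switchStep_iff_paschSwitch : SwitchStep {4} S S' ↔ PaschSwitch S S' := by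
  constructor
  · rintro ⟨a, b, k, x, hk, hcycle, hS'⟩
    obtain rfl : k = 2 := by
      rw [Set.mem_singleton_iff] at hk
      omega
    have hquad := isSwitchCycle_two_iff.mp hcycle
    rw [switchedBlocks_two hquad, hquad.blocks_eq_exchange_iff] at hS'
    exact ⟨_, _, _, _, _, _, hquad, hS'⟩
  · rintro ⟨a, b, c, d, e, f, hquad, hS'⟩
    let x : ZMod (2 * 2) → Fin v := ![b, c, d, e]
    have hx : PaschQuad S a (x 0) (x 1) (x 2) (x 3) f := hquad
    refine ⟨a, f, 2, x, rfl, isSwitchCycle_two_iff.mpr hx, ?_⟩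
    rw [switchedBlocks_two hx]
    exact hquad.blocks_eq_exchange_iff.mpr hS'

theorem swGraph_four_adj_iff (S : STS v) (q : Quot (@STS.Iso v)) :
    (SwGraph v {4}).Adj (Quot.mk _ S) q ↔
      Quot.mk _ S ≠ q ∧ ∃ S', Quot.mk _ S' = q ∧ PaschSwitch S S' := by
  have transport : ∀ T T' : STS v, Quot.mk (@STS.Iso v) T = Quot.mk _ S → Quot.mk _ T' = q →
      PaschSwitch T T' → ∃ S', Quot.mk _ S' = q ∧ PaschSwitch S S' := by
    intro T T' hT hT' h
    obtain ⟨φ, rfl⟩ := STS.mk_eq_mk_iff.mp hT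
    exact ⟨φ • T', hT' ▸ (STS.mk_eq_mk_iff.mpr ⟨φ, rfl⟩).symm, h.smul φ⟩
  simp only [SwGraph, SimpleGraph.fromRel_adj, switchStep_iff_paschSwitch]
  refine and_congr_right fun _ => ⟨?_, fun ⟨S', hS', h⟩ => Or.inl ⟨S, S', rfl, hS', h⟩⟩
  rintro (⟨T, T', hT, hT', h⟩ | ⟨T, T', hT, hT', h⟩)
  · exact transport T T' hT hT' h
  · exact transport T' T hT' hT h.symm

end Pasch

section PaschFamily

variable {v n : ℕ} {S : STS v} {P : Fin n → Finset (Finset (Fin v))}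

theorem IsPaschConfig.card_eq_four {Q : Finset (Finset (Fin v))} (h : IsPaschConfig S Q) :
    Q.card = 4 := by
  obtain ⟨a, b, c, d, e, f, hquad, rfl⟩ := h
  exact hquad.card_paschBlocks

theorem IsPaschConfig.disjoint_of_ne (hP : ∀ Q, IsPaschConfig S Q ↔ ∃ i, P i = Q)
    (hdisj : Pairwise (Function.onFun Disjoint P)) {Q R : Finset (Finset (Fin v))}
    (hQ : IsPaschConfig S Q) (hR : IsPaschConfig S R) (hne : Q ≠ R) : Disjoint Q R := by
  obtain ⟨i, rfl⟩ := (hP Q).mp hQ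
  obtain ⟨j, rfl⟩ := (hP R).mp hR
  exact hdisj fun hij => hne (congrArg P hij)

theorem natCard_isPaschConfig (hP : ∀ Q, IsPaschConfig S Q ↔ ∃ i, P i = Q)
    (hdisj : Pairwise (Function.onFun Disjoint P)) : Nat.card {Q // IsPaschConfig S Q} = n := by
  have hinj : Function.Injective P := by
    intro i j hij
    by_contra hne
    have hempty : P i = ∅ := by simpa [Function.onFun, hij] using hdisj hne
    simpa [hempty] using ((hP (P i)).mpr ⟨i, rfl⟩).card_eq_four
  have hrange : {Q | IsPaschConfig S Q} = Set.range P := Set.ext hP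
  change Nat.card ({Q | IsPaschConfig S Q} : Set _) = n
  rw [hrange, Nat.card_range_of_injective hinj, Nat.card_fin]

theorem ncard_paschConfig_blocks (hP : ∀ Q, IsPaschConfig S Q ↔ ∃ i, P i = Q)
    (hdisj : Pairwise (Function.onFun Disjoint P)) :
    {B | ∃ Q, IsPaschConfig S Q ∧ B ∈ Q}.ncard = n * 4 := by
  have hunion : {B | ∃ Q, IsPaschConfig S Q ∧ B ∈ Q} = (Finset.univ.biUnion P : Set _) := by
    ext B
    simp [hP]
  rw [hunion, Set.ncard_coe_finset, Finset.card_biUnion fun i _ j _ hij => hdisj hij]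
  simp [fun i => ((hP (P i)).mpr ⟨i, rfl⟩).card_eq_four]

theorem paschConfig_points_smul (φ : Equiv.Perm (Fin v)) :
    {z | ∃ Q, IsPaschConfig (φ • S) Q ∧ ∃ B ∈ Q, z ∈ B} =
      φ • {z | ∃ Q, IsPaschConfig S Q ∧ ∃ B ∈ Q, z ∈ B} := by
  ext z
  simp only [Set.mem_smul_set_iff_inv_smul_mem, Set.mem_ofPred_eq]
  constructor
  · rintro ⟨Q, hQ, B, hB, hz⟩
    exact ⟨φ⁻¹ • Q, (isPaschConfig_smul_iff φ).mp hQ, φ⁻¹ • B,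
      Finset.smul_mem_smul_finset hB, Finset.smul_mem_smul_finset hz⟩
  · rintro ⟨Q, hQ, B, hB, hz⟩
    exact ⟨φ • Q, hQ.smul φ, φ • B, Finset.smul_mem_smul_finset hB,
      Finset.inv_smul_mem_iff.mp hz⟩

theorem forall_isPaschConfig_smul_iff (φ : Equiv.Perm (Fin v))
    (hP : ∀ Q, IsPaschConfig S Q ↔ ∃ i, P i = Q) (Q : Finset (Finset (Fin v))) :
    IsPaschConfig (φ • S) Q ↔ ∃ i, φ • P i = Q := by
  simp only [isPaschConfig_smul_iff, hP, eq_inv_smul_iff]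

theorem pairwise_disjoint_smul (φ : Equiv.Perm (Fin v))
    (hdisj : Pairwise (Function.onFun Disjoint P)) :
    Pairwise (Function.onFun Disjoint fun i => φ • P i) := by
  intro i j hij
  rw [Function.onFun, ← Finset.disjoint_coe, Finset.coe_smul_finset, Finset.coe_smul_finset,
    Set.disjoint_smul_set, Finset.disjoint_coe]
  exact hdisj hij

end PaschFamily

section ConnectedComponent

variable {V W : Type*} {G : SimpleGraph V} {H : SimpleGraph W} {f : V → W}

theorem mem_supp_connectedComponentMk_iff (hG : G.Connected)
    (hf : ∀ v w, H.Adj (f v) w ↔ ∃ u, G.Adj v u ∧ f u = w) (v : V) (w : W) :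
    w ∈ (H.connectedComponentMk (f v)).supp ↔ ∃ u, f u = w := by
  rw [SimpleGraph.ConnectedComponent.mem_supp_iff, SimpleGraph.ConnectedComponent.eq]
  constructor
  · intro hw
    rw [SimpleGraph.reachable_comm, SimpleGraph.reachable_iff_reflTransGen] at hw
    induction hw with
    | refl => exact ⟨v, rfl⟩
    | tail _ hadj ih =>
      obtain ⟨u, rfl⟩ := ih
      obtain ⟨u', -, rfl⟩ := (hf u _).mp hadj
      exact ⟨u', rfl⟩
  · rintro ⟨u, rfl⟩
    let F : G →g H := ⟨f, fun {a b} hab => (hf a (f b)).mpr ⟨b, hab, rfl⟩⟩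
    exact (hG.preconnected u v).map F

theorem exists_connectedComponent_iso (hinj : Function.Injective f) (hG : G.Connected)
    (hf : ∀ v w, H.Adj (f v) w ↔ ∃ u, G.Adj v u ∧ f u = w) :
    ∃ (c : H.ConnectedComponent) (Φ : G ≃g H.induce c.supp), ∀ v, (Φ v : W) = f v := by
  obtain ⟨v₀⟩ := hG.nonempty
  have hsupp := mem_supp_connectedComponentMk_iff hG hf v₀
  let Φ : V ≃ (H.connectedComponentMk (f v₀)).supp :=
    Equiv.ofBijective (fun v => ⟨f v, (hsupp _).mpr ⟨v, rfl⟩⟩)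
      ⟨fun u v h => hinj (congrArg Subtype.val h), fun ⟨w, hw⟩ => by
        obtain ⟨v, rfl⟩ := (hsupp w).mp hw
        exact ⟨v, rfl⟩⟩
  refine ⟨_, ⟨Φ, fun {u v} => ?_⟩, fun v => rfl⟩
  change H.Adj (f u) (f v) ↔ G.Adj u v
  rw [hf]
  exact ⟨fun ⟨v', hadj, hv'⟩ => hinj hv' ▸ hadj, fun hadj => ⟨v, hadj, rfl⟩⟩

theorem exists_iso_apply_eq_iff (Φ : G ≃g H) {w w' : W} :
    (∃ ψ : H ≃g H, ψ w = w') ↔ ∃ φ : G ≃g G, φ (Φ.symm w) = Φ.symm w' := by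
  rw [(RelIso.relIsoCongr Φ Φ).surjective.exists]
  exact exists_congr fun φ => Φ.toEquiv.eq_symm_apply.symm

end ConnectedComponent

namespace PaschCube

/-- Six octahedra on the points `0, …, 17`, with vertices listed as `[x₀, x₁, y₀, y₁, z₀, z₁]` where
`x₀, x₁`, then `y₀, y₁`, then `z₀, z₁` are antipodal. The eight faces of an octahedron split into
two Pasch configurations which cover the same pairs, namely its edges. -/
def octahedra : List (List ℕ) :=
  [[0, 7, 1, 6, 16, 17],
   [8, 11, 9, 10, 16, 17],
   [2, 13, 4, 14, 16, 17],
   [3, 12, 5, 15, 16, 17],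
   [4, 14, 5, 15, 8, 9],
   [2, 13, 3, 12, 10, 11]]

/-- Row `x` lists the products of `x` with `0, …, 18` in the Steiner quasigroup of a system which
contains a Pasch configuration on each of the six octahedra. -/
def productTable : List (List ℕ) :=
  [[0, 16, 9, 14, 10, 7, 17, 5, 12, 2, 4, 15, 8, 18, 3, 11, 1, 6, 13],
   [16, 1, 15, 8, 6, 11, 4, 17, 3, 13, 14, 5, 18, 9, 10, 2, 0, 7, 12],
   [9, 15, 2, 10, 16, 6, 5, 13, 18, 0, 3, 12, 11, 7, 17, 1, 4, 14, 8],
   [14, 8, 10, 3, 7, 16, 12, 4, 1, 18, 2, 13, 6, 11, 0, 17, 5, 15, 9],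
   [10, 6, 16, 7, 4, 8, 1, 3, 5, 15, 0, 18, 14, 17, 12, 9, 2, 13, 11],
   [7, 11, 6, 16, 8, 5, 2, 0, 4, 14, 18, 1, 17, 15, 9, 13, 3, 12, 10],
   [17, 4, 5, 12, 1, 2, 6, 16, 13, 10, 9, 14, 3, 8, 11, 18, 7, 0, 15],
   [5, 17, 13, 4, 3, 0, 16, 7, 11, 12, 15, 8, 9, 2, 18, 10, 6, 1, 14],
   [12, 3, 18, 1, 5, 4, 13, 11, 8, 16, 17, 7, 0, 6, 15, 14, 9, 10, 2],
   [2, 13, 0, 18, 15, 14, 10, 12, 16, 9, 6, 17, 7, 1, 5, 4, 8, 11, 3],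
   [4, 14, 3, 2, 0, 18, 9, 15, 17, 6, 10, 16, 13, 12, 1, 7, 11, 8, 5],
   [15, 5, 12, 13, 18, 1, 14, 8, 7, 17, 16, 11, 2, 3, 6, 0, 10, 9, 4],
   [8, 18, 11, 6, 14, 17, 3, 9, 0, 7, 13, 2, 12, 10, 4, 16, 15, 5, 1],
   [18, 9, 7, 11, 17, 15, 8, 2, 6, 1, 12, 3, 10, 13, 16, 5, 14, 4, 0],
   [3, 10, 17, 0, 12, 9, 11, 18, 15, 5, 1, 6, 4, 16, 14, 8, 13, 2, 7],
   [11, 2, 1, 17, 9, 13, 18, 10, 14, 4, 7, 0, 16, 5, 8, 15, 12, 3, 6],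
   [1, 0, 4, 5, 2, 3, 7, 6, 9, 8, 11, 10, 15, 14, 13, 12, 16, 18, 17],
   [6, 7, 14, 15, 13, 12, 0, 1, 10, 11, 8, 9, 5, 4, 2, 3, 18, 17, 16],
   [13, 12, 8, 9, 11, 10, 15, 14, 2, 3, 5, 4, 1, 0, 7, 6, 17, 16, 18]]

/-- The vertex in position `k` in the list of the `i`-th octahedron. -/
def vertex (i : Fin 6) (k : ℕ) : Fin 19 :=
  Fin.ofNat 19 ((octahedra.getD i []).getD k 0)

/-- The Pasch configuration formed by one half of the faces of the `i`-th octahedron; the bit `β`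
selects the half. -/
def faces (i : Fin 6) (β : Bool) : Finset (Finset (Fin 19)) :=
  paschBlocks (vertex i 0) (vertex i 2) (vertex i (bif β then 5 else 4))
    (vertex i 3) (vertex i (bif β then 4 else 5)) (vertex i 1)

/-- The octahedron of which `x` and `y` form an edge, if there is one. -/
def octahedronIndex (x y : Fin 19) : Option (Fin 6) :=
  (List.finRange 6).find? fun i =>
    let l := octahedra.getD i []
    l.idxOf x.val < 6 ∧ l.idxOf y.val < 6 ∧ l.idxOf x.val / 2 ≠ l.idxOf y.val / 2

/-- The vertex of the `i`-th octahedron opposite to `x`; points off the octahedron are fixed. -/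
def antipode (i : Fin 6) (x : Fin 19) : Fin 19 :=
  let l := octahedra.getD i []
  Fin.ofNat 19 (l.getD (Nat.xor (l.idxOf x.val) 1) x)

/-- The third point of the block through `x` and `y`, where the bit `β` selects one of the two faces
through `x` and `y` if these form an edge of an octahedron. -/
def third (β : Bool) (x y : Fin 19) : Fin 19 :=
  let z := Fin.ofNat 19 ((productTable.getD x []).getD y 0)
  bif β then (octahedronIndex x y).elim z fun i => antipode i z else z

section Octahedra

variable {i j : Fin 6} {β β' : Bool} {x y z : Fin 19} {B : Finset (Fin 19)}

theorem octahedronIndex_comm : ∀ x y, octahedronIndex x y = octahedronIndex y x := by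
  decide +kernel

theorem third_comm : ∀ β x y, third β x y = third β y x := by decide +kernel

theorem third_self : ∀ β x, third β x x = x := by decide +kernel

theorem third_third : ∀ β x y, third β x (third β x y) = y := by decide +kernel

theorem octahedronIndex_third :
    ∀ β x y, octahedronIndex x (third β x y) = octahedronIndex x y := by decide +kernel

theorem antipode_antipode : ∀ i x, antipode i (antipode i x) = x := by decide +kernel

theorem third_not (β : Bool) (h : octahedronIndex x y = some i) :
    third (!β) x y = antipode i (third β x y) := by
  cases β <;> simp [third, h, antipode_antipode]

theorem ne_of_octahedronIndex_eq_some (h : octahedronIndex x y = some i) : x ≠ y := by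
  rintro rfl
  have hself : ∀ x, octahedronIndex x x = none := by decide +kernel
  simp [hself] at h

theorem third_rotate (h : octahedronIndex x y = some i) (hz : third β x y = z) :
    octahedronIndex y z = some i ∧ third β y z = x := by
  subst hz
  rw [third_comm β x y, octahedronIndex_third, octahedronIndex_comm, third_third]
  exact ⟨h, rfl⟩

theorem mem_faces :
    B ∈ faces i β ↔ ∃ x y, octahedronIndex x y = some i ∧ B = {x, y, third β x y} := by
  constructor
  · have hface : ∀ i β,
        let a := vertex i 0
        let b := vertex i 2
        let c := vertex i (bif β then 5 else 4)
        let d := vertex i 3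
        let e := vertex i (bif β then 4 else 5)
        (octahedronIndex a b = some i ∧ third β a b = c) ∧
        (octahedronIndex a d = some i ∧ third β a d = e) ∧
        (octahedronIndex b e = some i ∧ third β b e = vertex i 1) ∧
        (octahedronIndex c d = some i ∧ third β c d = vertex i 1) := by
      decide +kernel
    obtain ⟨h₁, h₂, h₃, h₄⟩ := hface i β
    intro hB
    simp only [faces, paschBlocks, Finset.mem_insert, Finset.mem_singleton] at hB
    rcases hB with rfl | rfl | rfl | rfl
    exacts [⟨_, _, h₁.1, by rw [h₁.2]⟩, ⟨_, _, h₂.1, by rw [h₂.2]⟩, ⟨_, _, h₃.1, by rw [h₃.2]⟩,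
      ⟨_, _, h₄.1, by rw [h₄.2]⟩]
  · rintro ⟨x, y, hxy, rfl⟩
    revert i β x y
    decide +kernel

theorem octahedronIndex_of_mem_faces (hB : B ∈ faces i β) (hx : x ∈ B) (hy : y ∈ B)
    (hxy : x ≠ y) : octahedronIndex x y = some i := by
  obtain ⟨u, w, huw, rfl⟩ := mem_faces.mp hB
  have h₁ : octahedronIndex u (third β u w) = some i := by rw [octahedronIndex_third, huw]
  have h₂ : octahedronIndex w (third β u w) = some i := (third_rotate huw rfl).1
  simp only [Finset.mem_insert, Finset.mem_singleton] at hx hy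
  rcases hx with rfl | rfl | rfl <;> rcases hy with rfl | rfl | rfl <;>
    grind [octahedronIndex_comm]

theorem disjoint_faces (hij : i ≠ j) : Disjoint (faces i β) (faces j β') := by
  refine Finset.disjoint_left.mpr fun B hi hj => hij ?_
  obtain ⟨x, y, hxy, rfl⟩ := mem_faces.mp hi
  exact Option.some_injective _ (hxy.symm.trans (octahedronIndex_of_mem_faces hj (by simp) (by simp)
    (ne_of_octahedronIndex_eq_some hxy)))

end Octahedra

section Systems

/-- The bit of the block through `x` and `y` in the system with parameter `e`, where `e i` selects
the Pasch configuration on the `i`-th octahedron. -/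
def bit (e : Fin 6 → Bool) (x y : Fin 19) : Bool :=
  (octahedronIndex x y).elim false e

theorem isSteinerQuasigroup (e : Fin 6 → Bool) :
    STS.IsSteinerQuasigroup fun x y => third (bit e x y) x y where
  idem x := third_self _ x
  comm x y := by rw [third_comm, bit, bit, octahedronIndex_comm]
  op_op x y := by rw [bit, octahedronIndex_third, ← bit, third_third]

/-- The 64 systems obtained by choosing one of the two Pasch configurations on each octahedron. -/
def sys (e : Fin 6 → Bool) : STS 19 :=
  STS.ofOp (fun x y => third (bit e x y) x y) (isSteinerQuasigroup e)

variable {e : Fin 6 → Bool} {i : Fin 6} {x y z : Fin 19} {B : Finset (Fin 19)}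

theorem bit_of_octahedronIndex_eq_some (h : octahedronIndex x y = some i) : bit e x y = e i := by
  rw [bit, h, Option.elim_some]

theorem bit_update_of_octahedronIndex_ne (h : octahedronIndex x y ≠ some i) (β : Bool) :
    bit (Function.update e i β) x y = bit e x y := by
  unfold bit
  cases hxy : octahedronIndex x y with
  | none => rfl
  | some j =>
    have hji : j ≠ i := by rintro rfl; exact h hxy
    simp only [Option.elim_some, Function.update_of_ne hji]

theorem mem_sys_blocks :
    B ∈ (sys e).blocks ↔ ∃ x y, x ≠ y ∧ B = {x, y, third (bit e x y) x y} :=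
  STS.mem_ofOp_blocks

theorem triple_mem_sys_blocks :
    {x, y, z} ∈ (sys e).blocks ↔ x ≠ y ∧ third (bit e x y) x y = z :=
  STS.triple_mem_ofOp_blocks

theorem faces_subset_sys_blocks (e : Fin 6 → Bool) (i : Fin 6) :
    faces i (e i) ⊆ (sys e).blocks := by
  intro B hB
  obtain ⟨x, y, hxy, rfl⟩ := mem_faces.mp hB
  exact triple_mem_sys_blocks.mpr
    ⟨ne_of_octahedronIndex_eq_some hxy, by rw [bit_of_octahedronIndex_eq_some hxy]⟩

theorem sys_blocks_sdiff_faces_subset (e : Fin 6 → Bool) (i : Fin 6) :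
    (sys e).blocks \ faces i (e i) ⊆
      (sys (Function.update e i !e i)).blocks \ faces i (!e i) := by
  intro B hB
  obtain ⟨hB, hBi⟩ := Finset.mem_sdiff.mp hB
  refine Finset.mem_sdiff.mpr ⟨?_, fun hBi' => hBi ?_⟩
  · obtain ⟨x, y, hxy, rfl⟩ := mem_sys_blocks.mp hB
    have hi : octahedronIndex x y ≠ some i := fun hi =>
      hBi (mem_faces.mpr ⟨x, y, hi, by rw [bit_of_octahedronIndex_eq_some hi]⟩)
    exact triple_mem_sys_blocks.mpr ⟨hxy, by rw [bit_update_of_octahedronIndex_ne hi]⟩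
  · obtain ⟨x, y, hi, rfl⟩ := mem_faces.mp hBi'
    exact mem_faces.mpr ⟨x, y, hi, by
      rw [← (triple_mem_sys_blocks.mp hB).2, bit_of_octahedronIndex_eq_some hi]⟩

theorem sys_blocks_sdiff_faces (e : Fin 6 → Bool) (i : Fin 6) :
    (sys e).blocks \ faces i (e i) =
      (sys (Function.update e i !e i)).blocks \ faces i (!e i) := by
  refine (sys_blocks_sdiff_faces_subset e i).antisymm ?_
  simpa using sys_blocks_sdiff_faces_subset (Function.update e i !e i) i

theorem faces_not (i : Fin 6) (β : Bool) :
    faces i (!β) = paschBlocks (vertex i 1) (vertex i 2) (vertex i (bif β then 5 else 4))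
      (vertex i 3) (vertex i (bif β then 4 else 5)) (vertex i 0) := by
  revert i β
  decide +kernel

theorem paschQuad_sys (e : Fin 6 → Bool) (i : Fin 6) :
    PaschQuad (sys e) (vertex i 0) (vertex i 2) (vertex i (bif e i then 5 else 4))
      (vertex i 3) (vertex i (bif e i then 4 else 5)) (vertex i 1) := by
  have hnodup : ∀ i β, [vertex i 0, vertex i 2, vertex i (bif β then 5 else 4), vertex i 3,
      vertex i (bif β then 4 else 5), vertex i 1].Nodup := by decide +kernel
  exact paschQuad_iff.mpr ⟨hnodup i (e i), faces_subset_sys_blocks e i⟩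

theorem isPaschConfig_faces (e : Fin 6 → Bool) (i : Fin 6) :
    IsPaschConfig (sys e) (faces i (e i)) :=
  isPaschConfig_iff.mpr ⟨_, _, _, _, _, _, paschQuad_sys e i, rfl⟩

theorem paschSwitch_sys (e : Fin 6 → Bool) (i : Fin 6) :
    PaschSwitch (sys e) (sys (Function.update e i !e i)) := by
  refine ⟨_, _, _, _, _, _, paschQuad_sys e i, paschQuad_iff.mpr ⟨?_, ?_⟩, ?_⟩
  · have hnodup : ∀ i β, [vertex i 1, vertex i 2, vertex i (bif β then 5 else 4), vertex i 3,
        vertex i (bif β then 4 else 5), vertex i 0].Nodup := by decide +kernel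
    exact hnodup i (e i)
  · rw [← faces_not]
    simpa using faces_subset_sys_blocks (Function.update e i !e i) i
  · rw [← faces_not]
    exact sys_blocks_sdiff_faces e i

end Systems

section PaschConfigurations

/-- The values which the bit of the block through `x` and `y` can take. -/
def possibleBits (x y : Fin 19) : List Bool :=
  if (octahedronIndex x y).isSome then [false, true] else [false]

/-- Blocks `{a, b, c}` and `{a, d, e}` with bits `β₁` and `β₂` belong to a Pasch configuration
`{a, b, c}, {a, d, e}, {b, e, f}, {c, d, f}` only if it consists of faces of an octahedron. -/
def ClosesInOctahedron (a b d : Fin 19) (β₁ β₂ : Bool) : Prop :=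
  let c := third β₁ a b
  let e := third β₂ a d
  ∀ β₃ ∈ possibleBits b e, ∀ β₄ ∈ possibleBits c d,
    third β₄ c d = third β₃ b e → [a, b, c, d, e, third β₃ b e].Nodup →
      ∃ i, octahedronIndex a b = some i ∧ octahedronIndex a d = some i ∧
        octahedronIndex b e = some i ∧ octahedronIndex c d = some i ∧ antipode i a = third β₃ b e

instance (a b d : Fin 19) (β₁ β₂ : Bool) : Decidable (ClosesInOctahedron a b d β₁ β₂) := by
  unfold ClosesInOctahedron
  infer_instance

theorem closesInOctahedron : ∀ a b, a ≠ b → ∀ β₁ ∈ possibleBits a b, ∀ d,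
    ∀ β₂ ∈ possibleBits a d, ClosesInOctahedron a b d β₁ β₂ := by
  decide +kernel

variable {e : Fin 6 → Bool} {i : Fin 6} {β : Bool} {a b c d f g x y z : Fin 19}

theorem bit_mem_possibleBits (e : Fin 6 → Bool) (x y : Fin 19) :
    bit e x y ∈ possibleBits x y := by
  unfold bit possibleBits
  cases octahedronIndex x y with
  | none => simp
  | some i => cases e i <;> simp

theorem mem_faces_of_third_eq (h : octahedronIndex x y = some i) (hz : third β x y = z) :
    {x, y, z} ∈ faces i β :=
  mem_faces.mpr ⟨x, y, h, by rw [hz]⟩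

theorem antipode_mem_faces_of_third_eq (h : octahedronIndex x y = some i)
    (hz : third β x y = z) : {x, y, antipode i z} ∈ faces i (!β) :=
  mem_faces_of_third_eq h (by rw [third_not β h, hz])

theorem exists_octahedron_of_paschQuad (h : PaschQuad (sys e) a b c d f g) :
    ∃ i, paschBlocks a b c d f g ⊆ faces i (e i) ∧ paschBlocks g b c d f a ⊆ faces i (!e i) := by
  have hnodup := h.nodup
  obtain ⟨-, habc, hadf, hbfg, hcdg⟩ := h
  rw [triple_mem_sys_blocks] at habc hadf hbfg hcdg
  have hcloses := closesInOctahedron a b habc.1 _ (bit_mem_possibleBits e a b) d _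
    (bit_mem_possibleBits e a d)
  simp only [ClosesInOctahedron, habc.2, hadf.2] at hcloses
  obtain ⟨i, hab, had, hbf, hcd, hag⟩ := hcloses _ (bit_mem_possibleBits e b f) _
    (bit_mem_possibleBits e c d) (by rw [hbfg.2, hcdg.2]) (by rwa [hbfg.2])
  rw [hbfg.2] at hag
  rw [bit_of_octahedronIndex_eq_some ‹_›] at habc hadf hbfg hcdg
  have hga : antipode i g = a := by rw [← hag, antipode_antipode]
  have hbc : octahedronIndex b c = some i ∧ third (e i) b c = a := third_rotate hab habc.2
  have hdf : octahedronIndex d f = some i ∧ third (e i) d f = a := third_rotate had hadf.2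
  have rotate : ∀ x y z : Fin 19, ({z, x, y} : Finset (Fin 19)) = {x, y, z} := by grind
  refine ⟨i, ?_, ?_⟩ <;>
    simp only [paschBlocks, Finset.insert_subset_iff, Finset.singleton_subset_iff]
  · exact ⟨mem_faces_of_third_eq hab habc.2, mem_faces_of_third_eq had hadf.2,
      mem_faces_of_third_eq hbf hbfg.2, mem_faces_of_third_eq hcd hcdg.2⟩
  · rw [rotate b c, rotate d f]
    exact ⟨hag ▸ antipode_mem_faces_of_third_eq hbc.1 hbc.2,
      hag ▸ antipode_mem_faces_of_third_eq hdf.1 hdf.2,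
      hga ▸ antipode_mem_faces_of_third_eq hbf hbfg.2,
      hga ▸ antipode_mem_faces_of_third_eq hcd hcdg.2⟩

theorem isPaschConfig_sys_iff {P : Finset (Finset (Fin 19))} :
    IsPaschConfig (sys e) P ↔ ∃ i, faces i (e i) = P := by
  refine ⟨fun h => ?_, fun ⟨i, hi⟩ => hi ▸ isPaschConfig_faces e i⟩
  obtain ⟨a, b, c, d, f, g, hquad, rfl⟩ := isPaschConfig_iff.mp h
  obtain ⟨i, hi, -⟩ := exists_octahedron_of_paschQuad hquad
  exact ⟨i, (Finset.eq_of_subset_of_card_le hi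
    ((isPaschConfig_faces e i).card_eq_four.trans h.card_eq_four.symm).le).symm⟩

theorem paschSwitch_sys_iff {S : STS 19} :
    PaschSwitch (sys e) S ↔ ∃ i, sys (Function.update e i !e i) = S := by
  refine ⟨fun ⟨a, b, c, d, f, g, hquad, _, hrest⟩ => ?_,
    fun ⟨i, hi⟩ => hi ▸ paschSwitch_sys e i⟩
  obtain ⟨i, hi, hi'⟩ := exists_octahedron_of_paschQuad hquad
  have hP : paschBlocks a b c d f g = faces i (e i) := Finset.eq_of_subset_of_card_le hi
    ((isPaschConfig_faces e i).card_eq_four.trans hquad.card_paschBlocks.symm).le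
  refine ⟨i, (STS.eq_of_blocks_subset fun B hB => ?_).symm⟩
  by_cases hBP : B ∈ paschBlocks g b c d f a
  · simpa using faces_subset_sys_blocks (Function.update e i !e i) i (by simpa using hi' hBP)
  · have hB' : B ∈ (sys e).blocks \ faces i (e i) := by
      rw [← hP, hrest]
      exact Finset.mem_sdiff.mpr ⟨hB, hBP⟩
    exact (Finset.mem_sdiff.mp (sys_blocks_sdiff_faces_subset e i hB')).1

theorem pairwise_disjoint_faces (e : Fin 6 → Bool) :
    Pairwise (Function.onFun Disjoint fun i => faces i (e i)) :=
  fun _ _ hij => disjoint_faces hij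

theorem ncard_paschConfig_points (e : Fin 6 → Bool) :
    {z | ∃ P, IsPaschConfig (sys e) P ∧ ∃ B ∈ P, z ∈ B}.ncard = 18 := by
  have hset : {z | ∃ P, IsPaschConfig (sys e) P ∧ ∃ B ∈ P, z ∈ B} =
      (({18} : Finset (Fin 19))ᶜ : Finset (Fin 19)) := by
    have hvertex : ∀ z, (∃ i y, octahedronIndex z y = some i) ↔ z ≠ 18 := by decide +kernel
    ext z
    simp only [isPaschConfig_sys_iff, Finset.coe_compl, Finset.coe_singleton, Set.mem_compl_iff,
      Set.mem_singleton_iff, ← hvertex, Set.mem_ofPred_eq]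
    constructor
    · rintro ⟨_, ⟨i, rfl⟩, B, hB, hz⟩
      have hcard : B.card = 3 := (sys e).card_blocks B (faces_subset_sys_blocks e i hB)
      obtain ⟨y, hy, hyz⟩ := Finset.exists_mem_ne (s := B) (a := z) (by rw [hcard]; norm_num)
      exact ⟨i, y, octahedronIndex_of_mem_faces hB hz hy hyz.symm⟩
    · rintro ⟨i, y, hzy⟩
      exact ⟨_, ⟨i, rfl⟩, _, mem_faces_of_third_eq hzy rfl, by simp⟩
  rw [hset, Set.ncard_coe_finset]
  rfl

end PaschConfigurations

section Symmetries

/-- The permutations forming a Klein four-group, which permutes the 64 systems: `σ = (16 17)`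
occurs if `s`, and `τ = (0 1)(2 3)⋯(14 15)` if `t`. -/
def symmetry (s t : Bool) : Equiv.Perm (Fin 19) :=
  (bif t then Function.Involutive.toPerm
      (fun x : Fin 19 => Fin.ofNat 19 (if x.val < 16 then Nat.xor x.val 1 else x))
      (fun x => by revert x; decide +kernel)
    else 1) *
  bif s then Equiv.swap 16 17 else 1

/-- The action of `symmetry s t` on the parameters of the 64 systems: `σ` switches the first four
octahedra, `τ` interchanges the octahedra `2` and `3` and switches the last two. -/
def twist (s t : Bool) (e : Fin 6 → Bool) (i : Fin 6) : Bool :=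
  e (bif t then Equiv.swap 2 3 i else i) ^^ bif decide (i < 4) then s else t

theorem symmetry_smul_sys (s t : Bool) (e : Fin 6 → Bool) :
    symmetry s t • sys e = sys (twist s t e) := by
  have hindex : ∀ s t x y, octahedronIndex (symmetry s t x) (symmetry s t y) =
      (octahedronIndex x y).map (bif t then Equiv.swap 2 3 else id) := by decide +kernel
  have hthird : ∀ s t β x y, symmetry s t (third β x y) =
      third (β ^^ bit (fun i => bif decide (i < 4) then s else t) x y)
        (symmetry s t x) (symmetry s t y) := by decide +kernel
  refine STS.smul_ofOp_eq_iff.mpr fun x y => ?_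
  rw [hthird]
  congr 1
  unfold bit
  rw [hindex]
  cases octahedronIndex x y with
  | none => rfl
  | some i => revert i; revert e; cases t <;> cases s <;> decide +kernel

theorem eq_false_of_twist_eq : ∀ s t e, twist s t e = e → s = false ∧ t = false := by
  decide +kernel

theorem sys_injective : Function.Injective sys := by
  have hthird : ∀ i β β', third β (vertex i 0) (vertex i 2) = third β' (vertex i 0) (vertex i 2) →
      β = β' := by decide +kernel
  have hindex : ∀ i, octahedronIndex (vertex i 0) (vertex i 2) = some i := by decide +kernel
  intro e e' h
  funext i
  have hop := STS.smul_ofOp_eq_iff.mp ((one_smul (Equiv.Perm (Fin 19)) (sys e)).trans h)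
    (vertex i 0) (vertex i 2)
  simp only [bit_of_octahedronIndex_eq_some (hindex i), Equiv.Perm.one_apply] at hop
  exact hthird i _ _ hop

end Symmetries

section Rigidity

variable {e e' : Fin 6 → Bool} {φ ψ : Equiv.Perm (Fin 19)}

/-- The permutations which preserve the blocks lying in no Pasch configuration; those are common to
all 64 systems. -/
structure PreservesFreeBlocks (φ : Equiv.Perm (Fin 19)) : Prop where
  index_iff : ∀ x y, octahedronIndex (φ x) (φ y) = none ↔ octahedronIndex x y = none
  map_third : ∀ x y, octahedronIndex x y = none →
    φ (third false x y) = third false (φ x) (φ y)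

theorem octahedronIndex_ne_none_iff (e : Fin 6 → Bool) {x y : Fin 19} :
    octahedronIndex x y ≠ none ↔
      x ≠ y ∧ ∃ P, IsPaschConfig (sys e) P ∧ ∃ B ∈ P, x ∈ B ∧ y ∈ B := by
  constructor
  · intro h
    obtain ⟨i, hi⟩ := Option.ne_none_iff_exists'.mp h
    exact ⟨ne_of_octahedronIndex_eq_some hi, _, isPaschConfig_faces e i, _,
      mem_faces.mpr ⟨x, y, hi, rfl⟩, by simp, by simp⟩
  · rintro ⟨hxy, P, hP, B, hB, hx, hy⟩
    obtain ⟨i, rfl⟩ := isPaschConfig_sys_iff.mp hP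
    simp [octahedronIndex_of_mem_faces hB hx hy hxy]

theorem octahedronIndex_ne_none_of_smul_eq (h : φ • sys e = sys e') {x y : Fin 19}
    (hxy : octahedronIndex x y ≠ none) : octahedronIndex (φ x) (φ y) ≠ none := by
  obtain ⟨hne, P, hP, B, hB, hx, hy⟩ := (octahedronIndex_ne_none_iff e).mp hxy
  exact (octahedronIndex_ne_none_iff e').mpr ⟨φ.injective.ne hne, φ • P, h ▸ hP.smul φ, φ • B,
    Finset.smul_mem_smul_finset hB, Finset.smul_mem_smul_finset hx, Finset.smul_mem_smul_finset hy⟩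

theorem preservesFreeBlocks_of_smul_eq (h : φ • sys e = sys e') : PreservesFreeBlocks φ := by
  have hindex : ∀ x y, octahedronIndex (φ x) (φ y) = none ↔ octahedronIndex x y = none := by
    refine fun x y => not_iff_not.mp ⟨fun hxy => ?_, octahedronIndex_ne_none_of_smul_eq h⟩
    simpa using octahedronIndex_ne_none_of_smul_eq (inv_smul_eq_iff.mpr h.symm) hxy
  refine ⟨hindex, fun x y hxy => ?_⟩
  have := STS.smul_ofOp_eq_iff.mp h x y
  simpa only [bit, hxy, (hindex x y).mpr hxy, Option.elim_none] using this

theorem symmetry_preservesFreeBlocks (s t : Bool) : PreservesFreeBlocks (symmetry s t) :=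
  preservesFreeBlocks_of_smul_eq (symmetry_smul_sys s t fun _ => false)

/-- The number of points `y` such that `x` and `y` form no edge of an octahedron. -/
def freeDegree (x : Fin 19) : ℕ :=
  Finset.card {y | octahedronIndex x y = none}

namespace PreservesFreeBlocks

theorem freeDegree_apply (hφ : PreservesFreeBlocks φ) (x : Fin 19) :
    freeDegree (φ x) = freeDegree x := by
  refine (Finset.card_equiv φ fun y => ?_).symm
  simp only [Finset.mem_filter, Finset.mem_univ, true_and, hφ.index_iff]

theorem apply_eighteen (hφ : PreservesFreeBlocks φ) : φ 18 = 18 := by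
  have hdegree : ∀ x, freeDegree x = freeDegree 18 → x = 18 := by decide +kernel
  exact hdegree _ (hφ.freeDegree_apply 18)

theorem apply_zero_five (hφ : PreservesFreeBlocks φ) :
    φ 0 = 0 ∧ φ 5 = 5 ∨ φ 0 = 1 ∧ φ 5 = 4 := by
  have map_eighteen (y : Fin 19) : third false 18 (φ y) = φ (third false 18 y) := by
    have hfree : ∀ y, octahedronIndex 18 y = none := by decide +kernel
    rw [hφ.map_third _ _ (hfree y), hφ.apply_eighteen]
  -- The relation `0 * (18 * (0 * (18 * 5))) = 5 * (18 * 0)` between free products, where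
  -- `x * y = third false x y`, is preserved by `φ`.
  have hrelation : third false (φ 0) (third false 18 (third false (φ 0) (third false 18 (φ 5)))) =
      third false (φ 5) (third false 18 (φ 0)) := by
    rw [map_eighteen, map_eighteen, ← hφ.map_third 0 _ (by decide +kernel), map_eighteen,
      ← hφ.map_third 0 _ (by decide +kernel), ← hφ.map_third 5 _ (by decide +kernel)]
    exact congrArg φ (by decide +kernel)
  have hfree : octahedronIndex (φ 5) (third false 18 (φ 0)) = none := by
    rw [map_eighteen, hφ.index_iff]
    decide +kernel
  have hpairs : ∀ u w, freeDegree u = freeDegree 0 → freeDegree w = freeDegree 5 →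
      octahedronIndex w (third false 18 u) = none →
      third false u (third false 18 (third false u (third false 18 w))) =
        third false w (third false 18 u) → u = 0 ∧ w = 5 ∨ u = 1 ∧ w = 4 := by decide +kernel
  exact hpairs _ _ (hφ.freeDegree_apply 0) (hφ.freeDegree_apply 5) hfree hrelation

theorem apply_eq (hφ : PreservesFreeBlocks φ) (hψ : PreservesFreeBlocks ψ) (h₀ : φ 0 = ψ 0)
    (h₅ : φ 5 = ψ 5) : ∀ x, x ≠ 16 → x ≠ 17 → φ x = ψ x := by
  have mul {x y : Fin 19} (hx : φ x = ψ x) (hy : φ y = ψ y) (hxy : octahedronIndex x y = none) :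
      φ (third false x y) = ψ (third false x y) := by
    rw [hφ.map_third _ _ hxy, hψ.map_third _ _ hxy, hx, hy]
  have h₁₈ : φ 18 = ψ 18 := hφ.apply_eighteen.trans hψ.apply_eighteen.symm
  have h₁₃ : φ 13 = ψ 13 := mul h₁₈ h₀ (by decide +kernel)
  have h₁₀ : φ 10 = ψ 10 := mul h₁₈ h₅ (by decide +kernel)
  have h₇ : φ 7 = ψ 7 := mul h₀ h₅ (by decide +kernel)
  have h₁₄ : φ 14 = ψ 14 := mul h₁₈ h₇ (by decide +kernel)
  have h₄ : φ 4 = ψ 4 := mul h₀ h₁₀ (by decide +kernel)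
  have h₁₁ : φ 11 = ψ 11 := mul h₁₈ h₄ (by decide +kernel)
  have h₁₅ : φ 15 = ψ 15 := mul h₀ h₁₁ (by decide +kernel)
  have h₆ : φ 6 = ψ 6 := mul h₁₈ h₁₅ (by decide +kernel)
  have h₃ : φ 3 = ψ 3 := mul h₀ h₁₄ (by decide +kernel)
  have h₉ : φ 9 = ψ 9 := mul h₁₈ h₃ (by decide +kernel)
  have h₂ : φ 2 = ψ 2 := mul h₀ h₉ (by decide +kernel)
  have h₈ : φ 8 = ψ 8 := mul h₁₈ h₂ (by decide +kernel)
  have h₁₂ : φ 12 = ψ 12 := mul h₀ h₈ (by decide +kernel)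
  have h₁ : φ 1 = ψ 1 := mul h₁₈ h₁₂ (by decide +kernel)
  intro x h₁₆ h₁₇
  fin_cases x <;> first | assumption | contradiction

theorem exists_eq_symmetry (hφ : PreservesFreeBlocks φ) : ∃ s t, φ = symmetry s t := by
  obtain ⟨t, h₀, h₅⟩ : ∃ t, φ 0 = symmetry false t 0 ∧ φ 5 = symmetry false t 5 := by
    obtain ⟨h₀, h₅⟩ | ⟨h₀, h₅⟩ := hφ.apply_zero_five
    · exact ⟨false, h₀, h₅⟩
    · exact ⟨true, h₀.trans (by decide +kernel), h₅.trans (by decide +kernel)⟩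
  obtain h | h := perm_eq_or_eq_mul_swap
    (hφ.apply_eq (symmetry_preservesFreeBlocks false t) h₀ h₅)
  · exact ⟨false, t, h⟩
  · exact ⟨true, t, h⟩

end PreservesFreeBlocks

theorem smul_sys_eq_iff :
    φ • sys e = sys e' ↔ ∃ s t, φ = symmetry s t ∧ twist s t e = e' := by
  constructor
  · intro h
    obtain ⟨s, t, rfl⟩ := (preservesFreeBlocks_of_smul_eq h).exists_eq_symmetry
    exact ⟨s, t, rfl, sys_injective ((symmetry_smul_sys s t e).symm.trans h)⟩
  · rintro ⟨s, t, rfl, rfl⟩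
    exact symmetry_smul_sys s t e

theorem eq_one_of_smul_sys_eq (h : φ • sys e = sys e) : φ = 1 := by
  obtain ⟨s, t, rfl, htwist⟩ := smul_sys_eq_iff.mp h
  obtain ⟨rfl, rfl⟩ := eq_false_of_twist_eq s t e htwist
  rfl

end Rigidity

section QuotientGraph

/-- The vertices of a graph isomorphic to the component. -/
@[ext]
structure Label where
  p : Bool
  q : Bool
  δ : Bool
  s : Bool
  deriving DecidableEq, Fintype

/-- A graph on the 16 labels which projects to the 3-cube with coordinates `(p, δ, s)`: it is
complete bipartite above every edge of the cube except the two edges in the `s`-direction with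
`δ = false`, above which `q` is constant. -/
def labelGraph : SimpleGraph Label where
  Adj x y := (x.p ≠ y.p ∧ x.δ = y.δ ∧ x.s = y.s) ∨ (x.p = y.p ∧ x.δ ≠ y.δ ∧ x.s = y.s) ∨
    (x.p = y.p ∧ x.δ = y.δ ∧ x.s ≠ y.s ∧ (x.δ = false → x.q = y.q))
  symm := ⟨by decide +kernel⟩
  loopless := ⟨by decide +kernel⟩

namespace labelGraph

instance : DecidableRel labelGraph.Adj := fun _ _ => by
  unfold labelGraph
  infer_instance

theorem q_eq_of_adj : ∀ {x y}, labelGraph.Adj x y → x.δ = false → x.s ≠ y.s → x.q = y.q := by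
  decide +kernel

theorem connected : labelGraph.Connected := by
  have hpath : ∀ x, ∃ y z, labelGraph.Adj ⟨false, false, true, false⟩ y ∧
      (y = z ∨ labelGraph.Adj y z) ∧ (z = x ∨ labelGraph.Adj z x) := by decide +kernel
  have reachable {x y : Label} (h : x = y ∨ labelGraph.Adj x y) : labelGraph.Reachable x y :=
    h.elim (fun h => h ▸ .rfl) (·.reachable)
  refine SimpleGraph.connected_iff_exists_forall_reachable _ |>.mpr
    ⟨⟨false, false, true, false⟩, fun x => ?_⟩
  obtain ⟨y, z, hy, hz, hx⟩ := hpath x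
  exact hy.reachable.trans ((reachable hz).trans (reachable hx))

theorem colorable_two : labelGraph.Colorable 2 := by
  have hvalid : ∀ x y, labelGraph.Adj x y → (x.p ^^ x.δ ^^ x.s) ≠ (y.p ^^ y.δ ^^ y.s) := by
    decide +kernel
  simpa using (SimpleGraph.Coloring.mk (fun x => x.p ^^ x.δ ^^ x.s) (hvalid _ _)).colorable

variable (φ : labelGraph ≃g labelGraph)

theorem δ_apply (x : Label) : (φ x).δ = x.δ := by
  have hdegree : ∀ x, labelGraph.degree x = bif x.δ then 6 else 5 := by decide +kernel
  have h := φ.degree_eq x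
  rw [hdegree, hdegree] at h
  revert h
  generalize (φ x).δ = b
  revert x b
  decide

theorem card_commonNeighbors_apply (x y : Label) :
    Fintype.card (labelGraph.commonNeighbors (φ x) (φ y)) =
      Fintype.card (labelGraph.commonNeighbors x y) := by
  refine (Fintype.card_congr (φ.toEquiv.subtypeEquiv fun z => ?_)).symm
  simp [SimpleGraph.mem_commonNeighbors, φ.map_adj_iff]

theorem p_apply_eq_iff {x y : Label} (h : x.δ ≠ y.δ) : (φ x).p = (φ y).p ↔ x.p = y.p := by
  have hp : ∀ x y : Label, x.δ ≠ y.δ → (x.p = y.p ↔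
      labelGraph.Adj x y ∨ Fintype.card (labelGraph.commonNeighbors x y) = 3) := by decide +kernel
  rw [hp x y h, hp (φ x) (φ y) (by rwa [δ_apply, δ_apply]), card_commonNeighbors_apply,
    φ.map_adj_iff]

theorem s_apply_eq_iff {x y : Label} (h : x.δ ≠ y.δ) : (φ x).s = (φ y).s ↔ x.s = y.s := by
  have hs : ∀ x y : Label, x.δ ≠ y.δ → (x.s = y.s ↔
      labelGraph.Adj x y ∨ Fintype.card (labelGraph.commonNeighbors x y) = 4) := by decide +kernel
  rw [hs x y h, hs (φ x) (φ y) (by rwa [δ_apply, δ_apply]), card_commonNeighbors_apply,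
    φ.map_adj_iff]

theorem exists_forall_eq_xor {f g : Label → Bool}
    (h : ∀ x y : Label, x.δ ≠ y.δ → (f x = f y ↔ g x = g y)) : ∃ a, ∀ x, f x = (g x ^^ a) := by
  have hcross (x y : Label) (hxy : x.δ ≠ y.δ) : (f x ^^ g x) = (f y ^^ g y) := by
    have hbool : ∀ a b c d : Bool, (a = b ↔ c = d) → (a ^^ c) = (b ^^ d) := by decide
    exact hbool _ _ _ _ (h x y hxy)
  have hlayer (x y : Label) : (f x ^^ g x) = (f y ^^ g y) := by
    by_cases hxy : x.δ = y.δ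
    · let z : Label := ⟨false, false, !x.δ, false⟩
      exact (hcross x z (by simp [z])).trans (hcross z y (by simp [z, hxy]))
    · exact hcross x y hxy
  refine ⟨f ⟨false, false, false, false⟩ ^^ g ⟨false, false, false, false⟩, fun x => ?_⟩
  rw [← hlayer x, Bool.xor_comm (f x), ← Bool.xor_assoc, Bool.xor_self, Bool.false_xor]

/-- The data determining an automorphism of `labelGraph`: translations of `p` and `s`, and for each
vertex of the 3-cube whether the two labels above it are interchanged, where the vertices with
`δ = false` only depend on `p` because `q` is constant along their edges in the `s`-direction. -/
abbrev AutData : Type :=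
  Bool × Bool × (Bool → Bool) × (Bool → Bool → Bool)

/-- The map of labels given by `d : AutData`. -/
def AutData.apply : AutData → Label → Label
  | (a, b, c₀, c₁), ⟨p, q, δ, s⟩ => ⟨p ^^ a, q ^^ bif δ then c₁ p s else c₀ p, δ, s ^^ b⟩

theorem AutData.apply_injective (d : AutData) : Function.Injective d.apply := by
  rintro ⟨p, q, δ, s⟩ ⟨p', q', δ', s'⟩ h
  simp only [apply, Label.mk.injEq, Bool.xor_left_inj] at h ⊢
  obtain ⟨rfl, hq, rfl, rfl⟩ := h
  simpa using hq

theorem AutData.adj_apply_iff (d : AutData) (x y : Label) :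
    labelGraph.Adj (d.apply x) (d.apply y) ↔ labelGraph.Adj x y := by
  obtain ⟨p, q, δ, s⟩ := x
  obtain ⟨p', q', δ', s'⟩ := y
  simp only [labelGraph, apply, ne_eq, Bool.xor_left_inj]
  refine or_congr_right (or_congr_right ?_)
  refine and_congr_right fun hp => and_congr_right fun hδ => and_congr_right fun _ => ?_
  refine imp_congr_right fun hδ' => ?_
  rw [← hp, ← hδ, hδ', cond_false, cond_false, Bool.xor_left_inj]

/-- The automorphism given by `d`. -/
noncomputable def AutData.toIso (d : AutData) : labelGraph ≃g labelGraph :=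
  ⟨Equiv.ofBijective d.apply (Finite.injective_iff_bijective.mp d.apply_injective),
    d.adj_apply_iff _ _⟩

theorem AutData.toIso_apply (d : AutData) (x : Label) : d.toIso x = d.apply x :=
  rfl

theorem AutData.toIso_injective : Function.Injective AutData.toIso := by
  rintro ⟨a, b, c₀, c₁⟩ ⟨a', b', c₀', c₁'⟩ h
  have hx (p δ s : Bool) :
      apply (a, b, c₀, c₁) ⟨p, false, δ, s⟩ = apply (a', b', c₀', c₁') ⟨p, false, δ, s⟩ :=
    DFunLike.congr_fun h ⟨p, false, δ, s⟩
  simp only [apply, Label.mk.injEq, Bool.xor_right_inj, true_and, Bool.false_xor] at hx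
  obtain ⟨rfl, -, rfl⟩ := hx false false false
  simp only [Prod.mk.injEq, true_and]
  exact ⟨funext fun p => (hx p false false).2.1, funext₂ fun p s => (hx p true s).2.1⟩

theorem AutData.toIso_surjective : Function.Surjective AutData.toIso := by
  intro φ
  obtain ⟨a, ha⟩ := exists_forall_eq_xor fun x y h => p_apply_eq_iff φ h
  obtain ⟨b, hb⟩ := exists_forall_eq_xor fun x y h => s_apply_eq_iff φ h
  have hq (p q δ s : Bool) :
      (φ ⟨p, q, δ, s⟩).q = (q ^^ (φ ⟨p, false, δ, s⟩).q) := by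
    have hinj : φ ⟨p, true, δ, s⟩ ≠ φ ⟨p, false, δ, s⟩ := by simp
    have hne : (φ ⟨p, true, δ, s⟩).q ≠ (φ ⟨p, false, δ, s⟩).q := fun h => hinj <| by
      rw [Label.ext_iff, ha, ha, hb, hb, δ_apply, δ_apply]
      simp [h]
    cases q
    · simp
    · grind
  have hs (p s : Bool) : (φ ⟨p, false, false, s⟩).q = (φ ⟨p, false, false, false⟩).q := by
    cases s
    · rfl
    · have hadj : labelGraph.Adj (φ ⟨p, false, false, true⟩) (φ ⟨p, false, false, false⟩) :=
        φ.map_adj_iff.mpr (by simp [labelGraph])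
      exact q_eq_of_adj hadj (δ_apply φ _) (by simp [hb])
  refine ⟨⟨a, b, fun p => (φ ⟨p, false, false, false⟩).q, fun p s => (φ ⟨p, false, true, s⟩).q⟩,
    RelIso.ext fun ⟨p, q, δ, s⟩ => ?_⟩
  rw [toIso_apply, Label.ext_iff, ha, hb, δ_apply, hq]
  cases δ <;> simp [apply, hs]

theorem card_aut : Nat.card (labelGraph ≃g labelGraph) = 256 := by
  rw [← Nat.card_congr (Equiv.ofBijective _ ⟨AutData.toIso_injective, AutData.toIso_surjective⟩)]
  simp

theorem exists_aut_apply_eq_iff {x y : Label} :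
    (∃ φ : labelGraph ≃g labelGraph, φ x = y) ↔ y.δ = x.δ := by
  constructor
  · rintro ⟨φ, rfl⟩
    exact δ_apply φ x
  · intro h
    refine ⟨AutData.toIso ⟨x.p ^^ y.p, x.s ^^ y.s, fun _ => x.q ^^ y.q, fun _ _ => x.q ^^ y.q⟩, ?_⟩
    rw [AutData.toIso_apply, Label.ext_iff]
    simp [AutData.apply, h]

section Layers

variable {W : Type*} {H : SimpleGraph W} {Φ : labelGraph ≃g H} {δ : Bool} {u w : W}

/-- The vertices with given `δ` in a graph identified with `labelGraph`. -/
def layer (Φ : labelGraph ≃g H) (δ : Bool) : Set W :=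
  {w | (Φ.symm w).δ = δ}

theorem layer_false_inter_layer_true : layer Φ false ∩ layer Φ true = ∅ := by
  ext w
  simp [layer]

theorem layer_false_union_layer_true : layer Φ false ∪ layer Φ true = Set.univ := by
  ext w
  simp [layer]

theorem ncard_layer : (layer Φ δ).ncard = 8 := by
  have hcard : ∀ δ, Fintype.card {x : Label // x.δ = δ} = 8 := by decide +kernel
  rw [← hcard δ, ← Nat.card_eq_fintype_card]
  exact Nat.card_congr (Φ.symm.toEquiv.subtypeEquiv fun w => Iff.rfl)

theorem mem_layer_iff_exists_aut (hu : u ∈ layer Φ δ) :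
    w ∈ layer Φ δ ↔ ∃ ψ : H ≃g H, ψ u = w := by
  subst hu
  exact (exists_aut_apply_eq_iff.symm.trans (exists_iso_apply_eq_iff Φ).symm)

end Layers

end labelGraph

end QuotientGraph

section Classes

variable {e : Fin 6 → Bool} {φ ψ : Equiv.Perm (Fin 19)}

/-- The complete invariant of the parameters of the 64 systems under `twist`. -/
def label (e : Fin 6 → Bool) : Label :=
  ⟨e 0 ^^ e 1, e 0 ^^ bif e 4 then e 3 else e 2, e 2 ^^ e 3, e 4 ^^ e 5⟩

/-- The parameters with label `ℓ` which vanish on the octahedra `0` and `4`. -/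
def representative (ℓ : Label) : Fin 6 → Bool :=
  ![false, ℓ.p, ℓ.q, ℓ.q ^^ ℓ.δ, false, ℓ.s]

theorem label_representative : ∀ ℓ, label (representative ℓ) = ℓ := by decide +kernel

theorem label_twist : ∀ s t e, label (twist s t e) = label e := by decide +kernel

theorem exists_twist_eq_representative : ∀ e, ∃ s t, twist s t e = representative (label e) := by
  decide +kernel

theorem adj_label_iff : ∀ e m,
    labelGraph.Adj (label e) m ↔ ∃ i, label (Function.update e i !e i) = m := by
  decide +kernel

/-- The isomorphism class of the systems whose parameters have label `ℓ`. -/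
def systemClass (ℓ : Label) : Quot (@STS.Iso 19) :=
  Quot.mk _ (sys (representative ℓ))

theorem mk_sys (e : Fin 6 → Bool) : Quot.mk _ (sys e) = systemClass (label e) := by
  obtain ⟨s, t, h⟩ := exists_twist_eq_representative e
  exact STS.mk_eq_mk_iff.mpr ⟨symmetry s t, smul_sys_eq_iff.mpr ⟨s, t, rfl, h⟩⟩

theorem systemClass_injective : Function.Injective systemClass := by
  intro ℓ m h
  obtain ⟨φ, hφ⟩ := STS.mk_eq_mk_iff.mp h
  obtain ⟨s, t, -, htwist⟩ := smul_sys_eq_iff.mp hφ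
  rw [← label_representative ℓ, ← label_twist s t, htwist, label_representative]

theorem adj_systemClass_iff (ℓ : Label) (q : Quot (@STS.Iso 19)) :
    (SwGraph 19 {4}).Adj (systemClass ℓ) q ↔ ∃ m, labelGraph.Adj ℓ m ∧ systemClass m = q := by
  have hlabel (m : Label) : labelGraph.Adj ℓ m ↔
      ∃ i, label (Function.update (representative ℓ) i !representative ℓ i) = m := by
    rw [← adj_label_iff, label_representative]
  rw [systemClass, swGraph_four_adj_iff]
  constructor
  · rintro ⟨-, S', rfl, hS'⟩
    obtain ⟨i, rfl⟩ := paschSwitch_sys_iff.mp hS'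
    exact ⟨_, (hlabel _).mpr ⟨i, rfl⟩, (mk_sys _).symm⟩
  · rintro ⟨m, hadj, rfl⟩
    obtain ⟨i, hi⟩ := (hlabel m).mp hadj
    exact ⟨systemClass_injective.ne hadj.ne, _, by rw [mk_sys, hi], paschSwitch_sys _ i⟩

theorem exists_component : ∃ (c : (SwGraph 19 {4}).ConnectedComponent)
    (Φ : labelGraph ≃g (SwGraph 19 {4}).induce c.supp), ∀ ℓ, (Φ ℓ : Quot _) = systemClass ℓ :=
  exists_connectedComponent_iso systemClass_injective labelGraph.connected adj_systemClass_iff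

theorem eq_one_of_smul_smul_sys_eq (h : ψ • φ • sys e = φ • sys e) : ψ = 1 := by
  have hconj : (φ⁻¹ * ψ * φ) • sys e = sys e := by
    rw [mul_smul, mul_smul, h, inv_smul_smul]
  simpa [mul_assoc, inv_mul_eq_one] using eq_one_of_smul_sys_eq hconj

end Classes

end PaschCube

open PaschCube

/-- There is a connected component of the Pasch switching graph
`Sw_4(19)` consisting of exactly 16 isomorphism classes, each containing exactly six
Pasch configurations which are pairwise block-disjoint, collectively covering 24
blocks and 18 points, with every one of the 16 systems having trivial automorphism
group; the component is bipartite and its automorphism group (as an undirected graph)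
has order 256, acting on the 16 vertices with two orbits of size 8. -/
theorem sw4_component_16 :
    ∃ c : (SwGraph 19 {4}).ConnectedComponent,
      Nat.card c.supp = 16 ∧
      (∀ q ∈ c.supp, ∀ S : STS 19, Quot.mk _ S = q →
        Nat.card {P : Finset (Finset (Fin 19)) // IsPaschConfig S P} = 6 ∧
        (∀ P Q : Finset (Finset (Fin 19)), IsPaschConfig S P → IsPaschConfig S Q →
          P ≠ Q → Disjoint P Q) ∧
        Set.ncard {B : Finset (Fin 19) | ∃ P, IsPaschConfig S P ∧ B ∈ P} = 24 ∧
        Set.ncard {z : Fin 19 | ∃ P, IsPaschConfig S P ∧ ∃ B ∈ P, z ∈ B} = 18 ∧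
        (∀ φ : Equiv.Perm (Fin 19),
          (∀ B : Finset (Fin 19), B ∈ S.blocks ↔ B.image φ ∈ S.blocks) →
          φ = Equiv.refl (Fin 19))) ∧
      ((SwGraph 19 {4}).induce c.supp).Colorable 2 ∧
      Nat.card (((SwGraph 19 {4}).induce c.supp) ≃g ((SwGraph 19 {4}).induce c.supp))
        = 256 ∧
      (∃ O₁ O₂ : Set c.supp, O₁ ∩ O₂ = ∅ ∧ O₁ ∪ O₂ = Set.univ ∧
        O₁.ncard = 8 ∧ O₂.ncard = 8 ∧
        (∀ u ∈ O₁, ∀ w : c.supp, w ∈ O₁ ↔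
          ∃ φ : ((SwGraph 19 {4}).induce c.supp) ≃g ((SwGraph 19 {4}).induce c.supp),
            φ u = w) ∧
        (∀ u ∈ O₂, ∀ w : c.supp, w ∈ O₂ ↔
          ∃ φ : ((SwGraph 19 {4}).induce c.supp) ≃g ((SwGraph 19 {4}).induce c.supp),
            φ u = w)) := by
  obtain ⟨c, Φ, hΦ⟩ := exists_component
  refine ⟨c, ?_, fun q hq S hS => ?_, ?_, ?_, ?_⟩
  · rw [← Nat.card_congr Φ.toEquiv, Nat.card_eq_fintype_card]
    rfl
  · obtain ⟨ℓ, hℓ⟩ := Φ.surjective ⟨q, hq⟩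
    obtain ⟨φ, rfl⟩ : ∃ φ : Equiv.Perm (Fin 19), φ • sys (representative ℓ) = S :=
      STS.mk_eq_mk_iff.mp ((hΦ ℓ).symm.trans ((congrArg Subtype.val hℓ).trans hS.symm))
    have hP := forall_isPaschConfig_smul_iff φ fun Q =>
      isPaschConfig_sys_iff (e := representative ℓ) (P := Q)
    have hdisj := pairwise_disjoint_smul φ (pairwise_disjoint_faces (representative ℓ))
    refine ⟨natCard_isPaschConfig hP hdisj, fun P Q => IsPaschConfig.disjoint_of_ne hP hdisj,
      ncard_paschConfig_blocks hP hdisj, ?_, fun ψ hψ => ?_⟩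
    · rw [paschConfig_points_smul, Set.ncard_smul_set, ncard_paschConfig_points]
    · exact eq_one_of_smul_smul_sys_eq ((STS.smul_eq_iff ψ).mpr hψ)
  · exact labelGraph.colorable_two.of_hom Φ.symm.toHom
  · rw [← Nat.card_congr (RelIso.relIsoCongr Φ Φ), labelGraph.card_aut]
  · exact ⟨labelGraph.layer Φ false, labelGraph.layer Φ true,
      labelGraph.layer_false_inter_layer_true, labelGraph.layer_false_union_layer_true,
      labelGraph.ncard_layer, labelGraph.ncard_layer,
      fun _ hu _ => labelGraph.mem_layer_iff_exists_aut hu,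
      fun _ hu _ => labelGraph.mem_layer_iff_exists_aut hu⟩
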